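/- arXiv:1612.08237 — 3 statements merged into one kernel-verified Lean document; each statement's English description precedes it below -/
import Mathlib

section
/- Let Ω ⊆ ℝ^n be a bounded open set with Lipschitz boundary, s ∈ (0,1), and let E ⊆ ℝ^n be measurable. Then P_s(E,Ω) equals the infimum of liminf_{h→∞} P_s(E_h,Ω) taken over all sequences (E_h) of open sets with smooth boundary such that E_h →loc E. -/
open MeasureTheory Set Filter Topology Metric Bornology
open scoped ENNReal NNReal symmDiff

noncomputable def Ls (n : ℕ) (s : ℝ) (A B : Set (EuclideanSpace ℝ (Fin n))) : ℝ≥0∞ :=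
  ∫⁻ x in A, ∫⁻ y in B, ENNReal.ofReal (dist x y ^ (-((n : ℝ) + s)))

noncomputable def Ps (n : ℕ) (s : ℝ) (E Ω : Set (EuclideanSpace ℝ (Fin n))) : ℝ≥0∞ :=
  Ls n s (E ∩ Ω) (Eᶜ ∩ Ω) + Ls n s (E ∩ Ω) (Eᶜ \ Ω) + Ls n s (E \ Ω) (Eᶜ ∩ Ω)

def LocConv (n : ℕ) (A : ℕ → Set (EuclideanSpace ℝ (Fin n)))
    (B : Set (EuclideanSpace ℝ (Fin n))) : Prop :=
  ∀ K : Set (EuclideanSpace ℝ (Fin n)), IsBounded K →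
    Tendsto (fun h => volume ((A h ∆ B) ∩ K)) atTop (𝓝 0)

def HasSmoothBoundary {n : ℕ} (E : Set (EuclideanSpace ℝ (Fin n))) : Prop :=
  ∃ (f : EuclideanSpace ℝ (Fin n) → ℝ) (t : ℝ), ContDiff ℝ (⊤ : ℕ∞) f ∧
    (∀ x, f x = t → fderiv ℝ f x ≠ 0) ∧ E = {x | t < f x}

def HasLipschitzBoundary {n : ℕ} (Ω : Set (EuclideanSpace ℝ (Fin n))) : Prop :=
  ∀ x ∈ frontier Ω, ∃ (U : Set (EuclideanSpace ℝ (Fin n)))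
    (_ : IsOpen U) (_ : x ∈ U)
    (L : EuclideanSpace ℝ (Fin n) ≃ₗᵢ[ℝ] WithLp 2 (EuclideanSpace ℝ (Fin (n - 1)) × ℝ))
    (φ : EuclideanSpace ℝ (Fin (n - 1)) → ℝ) (K : NNReal),
    LipschitzWith K φ ∧
    Ω ∩ U = {y ∈ U | φ (WithLp.equiv 2 _ (L y)).1 < (WithLp.equiv 2 _ (L y)).2} ∧
    frontier Ω ∩ U = {y ∈ U | φ (WithLp.equiv 2 _ (L y)).1 = (WithLp.equiv 2 _ (L y)).2}

/-- the kernel -/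
noncomputable def kk (n : ℕ) (s : ℝ) (p : EuclideanSpace ℝ (Fin n) × EuclideanSpace ℝ (Fin n)) :
    ℝ≥0∞ := ENNReal.ofReal (dist p.1 p.2 ^ (-((n : ℝ) + s)))

lemma measurable_kk (n : ℕ) (s : ℝ) : Measurable (kk n s) := by
  unfold kk
  exact ENNReal.measurable_ofReal.comp ((measurable_fst.dist measurable_snd).pow_const _)

lemma Ls_eq (n : ℕ) (s : ℝ) (A B : Set (EuclideanSpace ℝ (Fin n))) :
    Ls n s A B = ∫⁻ p in A ×ˢ B, kk n s p := by
  rw [Measure.volume_eq_prod, ← Measure.prod_restrict, lintegral_prod]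
  · rfl
  · exact (measurable_kk n s).aemeasurable

lemma Ls_eq_ind (n : ℕ) (s : ℝ) {A B : Set (EuclideanSpace ℝ (Fin n))}
    (hA : MeasurableSet A) (hB : MeasurableSet B) :
    Ls n s A B = ∫⁻ p, (A ×ˢ B).indicator (kk n s) p := by
  rw [Ls_eq, lintegral_indicator (hA.prod hB)]

lemma Ls_le_liminf (n : ℕ) (s : ℝ) {A B : Set (EuclideanSpace ℝ (Fin n))}
    {Ah Bh : ℕ → Set (EuclideanSpace ℝ (Fin n))}
    (hA : MeasurableSet A) (hB : MeasurableSet B)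
    (hAh : ∀ h, MeasurableSet (Ah h)) (hBh : ∀ h, MeasurableSet (Bh h))
    (h1 : ∀ᵐ x, x ∈ A → ∀ᶠ h in atTop, x ∈ Ah h)
    (h2 : ∀ᵐ x, x ∈ B → ∀ᶠ h in atTop, x ∈ Bh h) :
    Ls n s A B ≤ liminf (fun h => Ls n s (Ah h) (Bh h)) atTop := by
  rw [Ls_eq_ind n s hA hB]
  simp_rw [fun h => Ls_eq_ind n s (hAh h) (hBh h)]
  refine le_trans ?_ (lintegral_liminf_le
    (fun h => (measurable_kk n s).indicator ((hAh h).prod (hBh h))))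
  apply lintegral_mono_ae
  have e1 : ∀ᵐ p : EuclideanSpace ℝ (Fin n) × EuclideanSpace ℝ (Fin n),
      p.1 ∈ A → ∀ᶠ h in atTop, p.1 ∈ Ah h := Measure.quasiMeasurePreserving_fst.ae h1
  have e2 : ∀ᵐ p : EuclideanSpace ℝ (Fin n) × EuclideanSpace ℝ (Fin n),
      p.2 ∈ B → ∀ᶠ h in atTop, p.2 ∈ Bh h := Measure.quasiMeasurePreserving_snd.ae h2
  filter_upwards [e1, e2] with p h1 h2
  by_cases hp : p ∈ A ×ˢ B
  · rw [indicator_of_mem hp]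
    apply le_liminf_of_le (by isBoundedDefault)
    filter_upwards [h1 hp.1, h2 hp.2] with h a b
    rw [indicator_of_mem]
    exact ⟨a, b⟩
  · rw [indicator_of_notMem hp]; exact zero_le

lemma Ls_tendsto (n : ℕ) (s : ℝ) {A B : Set (EuclideanSpace ℝ (Fin n))}
    {Ah Bh : ℕ → Set (EuclideanSpace ℝ (Fin n))} {C D : Set (EuclideanSpace ℝ (Fin n))}
    (hC : MeasurableSet C) (hD : MeasurableSet D)
    (hA : MeasurableSet A) (hB : MeasurableSet B)
    (hAh : ∀ h, MeasurableSet (Ah h)) (hBh : ∀ h, MeasurableSet (Bh h))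
    (hAC : ∀ h, Ah h ⊆ C) (hBD : ∀ h, Bh h ⊆ D) (hfin : Ls n s C D ≠ ∞)
    (h1 : ∀ᵐ x, ∀ᶠ h in atTop, (x ∈ Ah h ↔ x ∈ A))
    (h2 : ∀ᵐ x, ∀ᶠ h in atTop, (x ∈ Bh h ↔ x ∈ B)) :
    Tendsto (fun h => Ls n s (Ah h) (Bh h)) atTop (𝓝 (Ls n s A B)) := by
  rw [Ls_eq_ind n s hA hB]
  simp_rw [fun h => Ls_eq_ind n s (hAh h) (hBh h)]
  refine tendsto_lintegral_of_dominated_convergence ((C ×ˢ D).indicator (kk n s))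
    (fun h => (measurable_kk n s).indicator ((hAh h).prod (hBh h))) ?_ ?_ ?_
  · intro h
    apply ae_of_all
    intro p
    exact indicator_le_indicator_of_subset (prod_mono (hAC h) (hBD h)) (fun _ => zero_le) p
  · rw [← Ls_eq_ind n s hC hD]; exact hfin
  have e1 : ∀ᵐ p : EuclideanSpace ℝ (Fin n) × EuclideanSpace ℝ (Fin n),
      ∀ᶠ h in atTop, (p.1 ∈ Ah h ↔ p.1 ∈ A) := Measure.quasiMeasurePreserving_fst.ae h1
  have e2 : ∀ᵐ p : EuclideanSpace ℝ (Fin n) × EuclideanSpace ℝ (Fin n),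
      ∀ᶠ h in atTop, (p.2 ∈ Bh h ↔ p.2 ∈ B) := Measure.quasiMeasurePreserving_snd.ae h2
  filter_upwards [e1, e2] with p h1 h2
  apply tendsto_const_nhds.congr'
  filter_upwards [h1, h2] with h a b
  have : p ∈ Ah h ×ˢ Bh h ↔ p ∈ A ×ˢ B := by simp only [mem_prod, a, b]
  by_cases hp : p ∈ A ×ˢ B
  · rw [indicator_of_mem hp, indicator_of_mem (this.2 hp)]
  · rw [indicator_of_notMem hp, indicator_of_notMem (fun h => hp (this.1 h))]

lemma ae_of_fast {n : ℕ} {Eh : ℕ → Set (EuclideanSpace ℝ (Fin n))}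
    {E : Set (EuclideanSpace ℝ (Fin n))}
    (h : ∀ k : ℕ, volume ((Eh k ∆ E) ∩ ball 0 k) ≤ (2⁻¹ : ℝ≥0∞) ^ k) :
    ∀ᵐ x, ∀ᶠ k in atTop, (x ∈ Eh k ↔ x ∈ E) := by
  have : ∑' k, volume ((Eh k ∆ E) ∩ ball 0 (k : ℝ)) ≠ ∞ := by
    refine ne_top_of_le_ne_top ?_ (ENNReal.tsum_le_tsum h)
    rw [ENNReal.tsum_geometric]
    simp
  have := ae_eventually_notMem this
  filter_upwards [this] with x hx
  obtain ⟨N, hN⟩ := exists_nat_gt ‖x‖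
  filter_upwards [hx, eventually_ge_atTop N] with k hk hkN
  have hb : x ∈ ball (0 : EuclideanSpace ℝ (Fin n)) k := by
    simp only [mem_ball, dist_zero_right]
    exact hN.trans_le (by exact_mod_cast hkN)
  by_contra hc
  apply hk
  refine ⟨?_, hb⟩
  rw [mem_symmDiff]
  tauto

lemma exists_subseq_ae {n : ℕ} {Eh : ℕ → Set (EuclideanSpace ℝ (Fin n))}
    {E : Set (EuclideanSpace ℝ (Fin n))} (h : LocConv n Eh E) :
    ∃ φ : ℕ → ℕ, StrictMono φ ∧ ∀ᵐ x, ∀ᶠ k in atTop, (x ∈ Eh (φ k) ↔ x ∈ E) := by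
  have : ∀ k : ℕ, ∀ᶠ m in atTop, volume ((Eh m ∆ E) ∩ ball 0 (k : ℝ)) ≤ (2⁻¹ : ℝ≥0∞) ^ k := by
    intro k
    have := h (ball 0 k) isBounded_ball
    exact this.eventually_le_const (by apply ENNReal.pow_pos; simp)
  obtain ⟨φ, hφ, hφ2⟩ := extraction_forall_of_eventually this
  exact ⟨φ, hφ, ae_of_fast hφ2⟩

lemma ennreal_le_liminf_add {u v : ℕ → ℝ≥0∞} :
    liminf u atTop + liminf v atTop ≤ liminf (fun h => u h + v h) atTop := by
  simp only [liminf_eq_iSup_iInf_of_nat]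
  rw [ENNReal.iSup_add_iSup_of_monotone]
  · refine iSup_mono fun m => le_iInf₂ fun i hi => ?_
    exact add_le_add (iInf₂_le i hi) (iInf₂_le i hi)
  · intro a b hab
    exact le_iInf₂ fun i hi => iInf₂_le i (le_trans hab hi)
  · intro a b hab
    exact le_iInf₂ fun i hi => iInf₂_le i (le_trans hab hi)

lemma Ps_le_liminf_of_ae (n : ℕ) (s : ℝ) {Ω E : Set (EuclideanSpace ℝ (Fin n))}
    {Eh : ℕ → Set (EuclideanSpace ℝ (Fin n))} (hΩ : MeasurableSet Ω)
    (hE : MeasurableSet E) (hEh : ∀ h, MeasurableSet (Eh h))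
    (h1 : ∀ᵐ x, ∀ᶠ k in atTop, (x ∈ Eh k ↔ x ∈ E)) :
    Ps n s E Ω ≤ liminf (fun h => Ps n s (Eh h) Ω) atTop := by
  unfold Ps
  have key : ∀ {A B : Set (EuclideanSpace ℝ (Fin n))}, MeasurableSet A → MeasurableSet B →
      Ls n s (E ∩ A) (Eᶜ ∩ B) ≤ liminf (fun h => Ls n s (Eh h ∩ A) ((Eh h)ᶜ ∩ B)) atTop := by
    intro A B hA hB
    apply Ls_le_liminf n s (hE.inter hA) (hE.compl.inter hB) (fun h => (hEh h).inter hA)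
      (fun h => (hEh h).compl.inter hB)
    · filter_upwards [h1] with x hx hxA
      filter_upwards [hx] with k hk
      exact ⟨hk.2 hxA.1, hxA.2⟩
    · filter_upwards [h1] with x hx hxA
      filter_upwards [hx] with k hk
      exact ⟨fun h => hxA.1 (hk.1 h), hxA.2⟩
  simp only [sdiff_eq]
  refine (add_le_add (add_le_add (key hΩ hΩ) (key hΩ hΩ.compl)) (key hΩ.compl hΩ)).trans ?_
  refine (add_le_add_left ennreal_le_liminf_add _).trans ?_
  exact ennreal_le_liminf_add

lemma HasSmoothBoundary.measurableSet {n : ℕ} {E : Set (EuclideanSpace ℝ (Fin n))}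
    (h : HasSmoothBoundary E) : MeasurableSet E := by
  obtain ⟨f, t, hf, -, rfl⟩ := h
  exact (isOpen_lt continuous_const hf.continuous).measurableSet

lemma LocConv.comp {n : ℕ} {Eh : ℕ → Set (EuclideanSpace ℝ (Fin n))}
    {E : Set (EuclideanSpace ℝ (Fin n))} (h : LocConv n Eh E) {φ : ℕ → ℕ} (hφ : StrictMono φ) :
    LocConv n (fun k => Eh (φ k)) E := fun K hK => (h K hK).comp hφ.tendsto_atTop

lemma Ps_le_liminf (n : ℕ) (s : ℝ) {Ω E : Set (EuclideanSpace ℝ (Fin n))}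
    {Eh : ℕ → Set (EuclideanSpace ℝ (Fin n))} (hΩ : MeasurableSet Ω)
    (hE : MeasurableSet E) (hEh : ∀ h, MeasurableSet (Eh h)) (hloc : LocConv n Eh E) :
    Ps n s E Ω ≤ liminf (fun h => Ps n s (Eh h) Ω) atTop := by
  by_contra! hlt
  obtain ⟨c, hc1, hc2⟩ := exists_between hlt
  have hf : ∃ᶠ h in atTop, Ps n s (Eh h) Ω < c :=
    frequently_lt_of_liminf_lt (by isBoundedDefault) hc1
  obtain ⟨φ, hφ, hφc⟩ := extraction_of_frequently_atTop hf
  obtain ⟨ψ, hψ, hae⟩ := exists_subseq_ae (hloc.comp hφ)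
  have h3 := Ps_le_liminf_of_ae n s hΩ hE (fun h => hEh (φ (ψ h))) hae
  have h4 : liminf (fun h => Ps n s (Eh (φ (ψ h))) Ω) atTop ≤ c := by
    refine (liminf_le_liminf (v := fun _ => c) (Eventually.of_forall fun h => (hφc (ψ h)).le)
      (by isBoundedDefault) (by isBoundedDefault)).trans ?_
    simp
  exact absurd (h3.trans h4) (not_le.2 hc2)

lemma chart {n : ℕ} {Ω : Set (EuclideanSpace ℝ (Fin n))} (hΩ : HasLipschitzBoundary Ω)
    (x : EuclideanSpace ℝ (Fin n)) (hx : x ∈ frontier Ω) :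
    ∃ (r : ℝ) (e : EuclideanSpace ℝ (Fin n)) (g : EuclideanSpace ℝ (Fin n) → ℝ) (K : ℝ≥0),
      0 < r ∧ ‖e‖ = 1 ∧ LipschitzWith K g ∧ (∀ y t, g (y + t • e) = g y + t) ∧
      (∀ y ∈ ball x (2 * r), (y ∈ Ω ↔ 0 < g y)) ∧
      (∀ y ∈ ball x (2 * r), (y ∈ frontier Ω ↔ g y = 0)) := by
  obtain ⟨U, hU, hxU, L, φ, K, hφ, h1, h2⟩ := hΩ x hx
  obtain ⟨r, hr, hrU⟩ := Metric.isOpen_iff.1 hU x hxU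
  refine ⟨r / 2, L.symm (WithLp.toLp 2 (0, 1)),
    fun y => (L y).ofLp.2 - φ (L y).ofLp.1, 1 + K, by positivity, ?_, ?_, ?_, ?_, ?_⟩
  · rw [LinearIsometryEquiv.norm_map]
    simp
  · have h2' : LipschitzWith 1 (fun y => (L y).ofLp.2) := by
      apply LipschitzWith.of_dist_le_mul
      intro a b
      rw [NNReal.coe_one, one_mul, ← L.dist_map a b, dist_eq_norm, dist_eq_norm]
      exact WithLp.norm_snd_le _ (L a - L b)
    have h1' : LipschitzWith 1 (fun y => (L y).ofLp.1) := by
      apply LipschitzWith.of_dist_le_mul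
      intro a b
      rw [NNReal.coe_one, one_mul, ← L.dist_map a b, dist_eq_norm, dist_eq_norm]
      exact WithLp.norm_fst_le _ (L a - L b)
    have := h2'.sub (hφ.comp h1')
    rw [mul_one] at this
    exact this
  · intro y t
    simp
    ring
  · intro y hy
    have hyU : y ∈ U := hrU (by convert hy using 2; ring)
    have := Set.ext_iff.1 h1 y
    simp only [mem_inter_iff, hyU, and_true] at this
    rw [this]
    simp [hyU]
  · intro y hy
    have hyU : y ∈ U := hrU (by convert hy using 2; ring)
    have := Set.ext_iff.1 h2 y
    simp only [mem_inter_iff, hyU, and_true] at this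
    rw [this]
    simp only [mem_ofPred_eq, hyU, true_and]
    exact ⟨fun h => sub_eq_zero.2 h.symm, fun h => (sub_eq_zero.1 h).symm⟩

lemma field {n : ℕ} {Ω : Set (EuclideanSpace ℝ (Fin n))} (hb : IsBounded Ω) (ho : IsOpen Ω)
    (hΩ : HasLipschitzBoundary Ω) :
    ∃ (V : EuclideanSpace ℝ (Fin n) → EuclideanSpace ℝ (Fin n)) (K : ℝ≥0) (M ε₀ : ℝ),
      ContDiff ℝ (⊤ : ℕ∞) V ∧ LipschitzWith K V ∧ (∀ x, ‖V x‖ ≤ M) ∧ 0 < ε₀ ∧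
      ∀ ε, 0 < ε → ε < ε₀ → ∀ x ∈ closure Ω, x + ε • V x ∈ Ω := by
  classical
  have hcomp : IsCompact (frontier Ω) :=
    Metric.isCompact_of_isClosed_isBounded isClosed_frontier (hb.closure.subset frontier_subset_closure)
  choose! r e g K hr he hg hgt hin hfr using chart hΩ
  obtain ⟨T, hT, hcov⟩ := hcomp.elim_nhds_subcover (fun x => ball x (r x))
    (fun x hx => ball_mem_nhds x (hr x hx))
  have hbump : ∀ x, ∃ ψ : EuclideanSpace ℝ (Fin n) → ℝ, x ∈ T → (ContDiff ℝ (⊤ : ℕ∞) ψ ∧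
      (∀ y, 0 ≤ ψ y) ∧ (∀ y, ψ y ≤ 1) ∧ Function.support ψ = ball x (3 / 2 * r x) ∧
      HasCompactSupport ψ) := by
    intro x
    by_cases hx : x ∈ T
    · have hrx := hr x (hT x hx)
      let b : ContDiffBump x := ⟨r x, 3 / 2 * r x, hrx, by linarith⟩
      exact ⟨b, fun _ => ⟨b.contDiff, fun y => b.nonneg, fun y => b.le_one, b.support_eq,
        b.hasCompactSupport⟩⟩
    · exact ⟨0, fun h => absurd h hx⟩
  choose ψ hψ using hbump
  have hVs : ContDiff ℝ (⊤ : ℕ∞) (fun x => ∑ i ∈ T, ψ i x • e i) :=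
    ContDiff.sum fun i hi => (hψ i hi).1.smul contDiff_const
  have hVc : HasCompactSupport (fun x => ∑ i ∈ T, ψ i x • e i) := by
    have : ∀ S ⊆ T, HasCompactSupport (fun x => ∑ i ∈ S, ψ i x • e i) := by
      intro S
      induction S using Finset.induction_on with
      | empty => intro _; simp only [Finset.sum_empty]; exact HasCompactSupport.zero
      | insert j S hj ih =>
        intro hS
        simp only [Finset.sum_insert hj]
        exact HasCompactSupport.add ((hψ j (hS (Finset.mem_insert_self _ _))).2.2.2.2.smul_right)
          (ih (fun i hi => hS (Finset.mem_insert_of_mem hi)))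
    exact this T subset_rfl
  obtain ⟨KV, hKV⟩ := ContDiff.lipschitzWith_of_hasCompactSupport hVc hVs (by simp)
  have hsum : ∀ S ⊆ T, ∀ x, ‖∑ i ∈ S, ψ i x • e i‖ ≤ T.card := by
    intro S hS x
    refine (norm_sum_le _ _).trans ?_
    refine (Finset.sum_le_card_nsmul S _ 1 ?_).trans ?_
    · intro i hi
      rw [norm_smul, he i (hT i (hS hi)), mul_one, Real.norm_of_nonneg ((hψ i (hS hi)).2.1 x)]
      exact (hψ i (hS hi)).2.2.1 x
    · simpa using Finset.card_le_card hS
  -- choose ε₀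
  have hε : ∃ ε₀ : ℝ, 0 < ε₀ ∧ ∀ i ∈ T, ε₀ * T.card ≤ r i / 2 := by
    rcases T.eq_empty_or_nonempty with h | h
    · exact ⟨1, one_pos, by simp [h]⟩
    · obtain ⟨j, hj, hjm⟩ := T.exists_min_image r h
      have hc : 0 < (T.card : ℝ) := by exact_mod_cast h.card_pos
      have := hr j (hT j hj)
      refine ⟨r j / 2 / T.card, by positivity, fun i hi => ?_⟩
      rw [div_mul_cancel₀ _ hc.ne']
      have := hjm i hi
      linarith
  obtain ⟨ε₀, hε₀, hε₀T⟩ := hε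
  refine ⟨_, KV, T.card, ε₀, hVs, hKV, hsum T subset_rfl, hε₀, ?_⟩
  intro ε hεpos hεlt x hx
  have main : ∀ S ⊆ T, (x + ε • ∑ i ∈ S, ψ i x • e i ∈ closure Ω) ∧
      ((x ∈ Ω ∨ ∃ i ∈ S, ψ i x ≠ 0) → x + ε • ∑ i ∈ S, ψ i x • e i ∈ Ω) := by
    intro S
    induction S using Finset.induction_on with
    | empty => intro _; simpa using hx
    | insert j S hj ih =>
      intro hS
      have hjT : j ∈ T := hS (Finset.mem_insert_self _ _)
      have hST : S ⊆ T := fun i hi => hS (Finset.mem_insert_of_mem hi)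
      obtain ⟨ih1, ih2⟩ := ih hST
      by_cases hz : ψ j x = 0
      · rw [Finset.sum_insert hj, hz, zero_smul, zero_add]
        refine ⟨ih1, fun h => ih2 ?_⟩
        rcases h with h | ⟨i, hi, hi2⟩
        · exact Or.inl h
        · rcases Finset.mem_insert.1 hi with rfl | hi
          · exact absurd hz hi2
          · exact Or.inr ⟨i, hi, hi2⟩
      · have hxj : x ∈ ball j (3 / 2 * r j) := by
          rw [← (hψ j hjT).2.2.2.1]; exact hz
        have close : ∀ S ⊆ T, x + ε • ∑ i ∈ S, ψ i x • e i ∈ ball j (2 * r j) := by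
          intro S hS
          rw [mem_ball] at hxj ⊢
          have h1 : dist (x + ε • ∑ i ∈ S, ψ i x • e i) x ≤ r j / 2 := by
            rw [dist_eq_norm, add_sub_cancel_left, norm_smul, Real.norm_of_nonneg hεpos.le]
            refine le_trans ?_ (hε₀T j hjT)
            exact mul_le_mul hεlt.le (hsum S hS x) (norm_nonneg _) hε₀.le
          have := dist_triangle (x + ε • ∑ i ∈ S, ψ i x • e i) x j
          linarith
        have hnew : x + ε • ∑ i ∈ insert j S, ψ i x • e i ∈ Ω := by
          rw [hin j (hT j hjT) _ (close _ hS)]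
          have : x + ε • ∑ i ∈ insert j S, ψ i x • e i
              = (x + ε • ∑ i ∈ S, ψ i x • e i) + (ε * ψ j x) • e j := by
            rw [Finset.sum_insert hj, smul_add, smul_smul]; abel
          rw [this, hgt j (hT j hjT)]
          have hpos : 0 < ε * ψ j x :=
            mul_pos hεpos (lt_of_le_of_ne ((hψ j hjT).2.1 x) (Ne.symm hz))
          have hold : 0 ≤ g j (x + ε • ∑ i ∈ S, ψ i x • e i) := by
            by_cases ho' : x + ε • ∑ i ∈ S, ψ i x • e i ∈ Ω
            · exact ((hin j (hT j hjT) _ (close _ hST)).1 ho').le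
            · have : x + ε • ∑ i ∈ S, ψ i x • e i ∈ frontier Ω := by
                rw [ho.frontier_eq]; exact ⟨ih1, ho'⟩
              exact ((hfr j (hT j hjT) _ (close _ hST)).1 this).ge
          linarith
        exact ⟨subset_closure hnew, fun _ => hnew⟩
  apply (main T subset_rfl).2
  by_cases hxΩ : x ∈ Ω
  · exact Or.inl hxΩ
  · right
    have hxf : x ∈ frontier Ω := by rw [ho.frontier_eq]; exact ⟨hx, hxΩ⟩
    have := hcov hxf
    simp only [mem_iUnion] at this
    obtain ⟨i, hi, hxi⟩ := this
    refine ⟨i, hi, ?_⟩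
    have : x ∈ Function.support (ψ i) := by
      rw [(hψ i hi).2.2.2.1]
      exact ball_subset_ball (by linarith [hr i (hT i hi)]) hxi
    exact this

/-- tubular estimate near a graph -/
lemma tube {n : ℕ} {e : EuclideanSpace ℝ (Fin n)} {g : EuclideanSpace ℝ (Fin n) → ℝ}
    (he : ‖e‖ = 1) (hg : Continuous g) (hgt : ∀ y t, g (y + t • e) = g y + t)
    (x : EuclideanSpace ℝ (Fin n)) (R ρ : ℝ) :
    volume {y ∈ ball x R | |g y| ≤ ρ} ≤ ENNReal.ofReal (2 * ρ) * volume (ball x (R + 1)) := by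
  set S := {y ∈ ball x R | |g y| ≤ ρ} with hS
  have hSm : MeasurableSet S :=
    measurableSet_ball.inter (isClosed_le hg.abs continuous_const).measurableSet
  have hmeas : Measurable (fun p : ℝ × EuclideanSpace ℝ (Fin n) =>
      S.indicator (fun _ => (1 : ℝ≥0∞)) (p.2 - p.1 • e)) := by
    apply (measurable_const.indicator hSm).comp
    fun_prop
  calc volume S = ∫⁻ t in Icc (0 : ℝ) 1, volume S := by simp
    _ = ∫⁻ t in Icc (0 : ℝ) 1, ∫⁻ y, S.indicator (fun _ => (1 : ℝ≥0∞)) (y - t • e) := by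
        congr 1; ext t
        rw [lintegral_sub_right_eq_self (fun y => S.indicator (fun _ => (1 : ℝ≥0∞)) y) (t • e)]
        rw [lintegral_indicator_const hSm, one_mul]
    _ = ∫⁻ y, ∫⁻ t in Icc (0 : ℝ) 1, S.indicator (fun _ => (1 : ℝ≥0∞)) (y - t • e) := by
        rw [lintegral_lintegral_swap]
        exact hmeas.aemeasurable
    _ ≤ ∫⁻ y, (ball x (R + 1)).indicator (fun _ => ENNReal.ofReal (2 * ρ)) y := by
        apply lintegral_mono
        intro y
        by_cases hy : y ∈ ball x (R + 1)
        · simp only [indicator_of_mem hy]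
          have hle : ∀ t, S.indicator (fun _ => (1 : ℝ≥0∞)) (y - t • e) ≤
              (Icc (g y - ρ) (g y + ρ)).indicator (fun _ => (1 : ℝ≥0∞)) t := by
            intro t
            by_cases hs : y - t • e ∈ S
            · rw [indicator_of_mem hs, indicator_of_mem]
              have h1 := hs.2
              have h2 := hgt (y - t • e) t
              rw [sub_add_cancel] at h2
              rw [abs_le] at h1
              constructor <;> linarith
            · rw [indicator_of_notMem hs]; exact zero_le
          calc _ ≤ ∫⁻ t in Icc (0 : ℝ) 1,
                (Icc (g y - ρ) (g y + ρ)).indicator (fun _ => (1 : ℝ≥0∞)) t := lintegral_mono hle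
            _ ≤ ∫⁻ t, (Icc (g y - ρ) (g y + ρ)).indicator (fun _ => (1 : ℝ≥0∞)) t :=
                setLIntegral_le_lintegral _ _
            _ = ENNReal.ofReal (2 * ρ) := by
                rw [lintegral_indicator_const measurableSet_Icc, one_mul, Real.volume_Icc]
                congr 1; ring
        · simp only [indicator_of_notMem hy]
          rw [nonpos_iff_eq_zero]
          apply setLIntegral_eq_zero measurableSet_Icc
          intro t ht
          apply indicator_of_notMem
          intro hs
          apply hy
          have h1 := hs.1
          rw [mem_ball] at h1 ⊢
          have h2 := dist_triangle y (y - t • e) x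
          have h3 : dist y (y - t • e) ≤ 1 := by
            rw [dist_eq_norm, sub_sub_cancel, norm_smul, he, mul_one, Real.norm_of_nonneg ht.1]
            exact ht.2
          linarith
    _ = _ := lintegral_indicator_const measurableSet_ball _

lemma translate_est {n : ℕ} {Ω : Set (EuclideanSpace ℝ (Fin n))} (hb : IsBounded Ω)
    (hΩ : HasLipschitzBoundary Ω) :
    ∃ C : ℝ≥0∞, C ≠ ∞ ∧ ∀ h : EuclideanSpace ℝ (Fin n),
      volume {x ∈ Ω | x + h ∉ Ω} ≤ C * ENNReal.ofReal (min ‖h‖ 1) := by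
  classical
  have hcomp : IsCompact (frontier Ω) :=
    Metric.isCompact_of_isClosed_isBounded isClosed_frontier (hb.closure.subset frontier_subset_closure)
  choose! r e g K hr he hg hgt hin hfr using chart hΩ
  obtain ⟨T, hT, hcov⟩ := hcomp.elim_nhds_subcover (fun x => ball x (r x))
    (fun x hx => ball_mem_nhds x (hr x hx))
  have hρ : ∃ ρ : ℝ, 0 < ρ ∧ ρ ≤ 1 ∧ ∀ i ∈ T, ρ ≤ r i := by
    rcases T.eq_empty_or_nonempty with h | h
    · exact ⟨1, one_pos, le_rfl, by simp [h]⟩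
    · obtain ⟨j, hj, hjm⟩ := T.exists_min_image r h
      exact ⟨min (r j) 1, lt_min (hr j (hT j hj)) one_pos, min_le_right _ _,
        fun i hi => (min_le_left _ _).trans (hjm i hi)⟩
  obtain ⟨ρ, hρ0, hρ1, hρT⟩ := hρ
  set C1 : ℝ≥0∞ := ∑ i ∈ T, ENNReal.ofReal (2 * K i) * volume (ball i (2 * r i + 1)) with hC1
  set C2 : ℝ≥0∞ := volume Ω * ENNReal.ofReal (1 / ρ) with hC2
  refine ⟨C1 + C2, ?_, ?_⟩
  · apply ENNReal.add_ne_top.2 ⟨?_, ?_⟩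
    · apply ENNReal.sum_ne_top.2
      intro i hi
      exact ENNReal.mul_ne_top ENNReal.ofReal_ne_top measure_ball_lt_top.ne
    · exact ENNReal.mul_ne_top hb.measure_lt_top.ne ENNReal.ofReal_ne_top
  intro h
  by_cases hh : ‖h‖ < ρ
  · rw [min_eq_left (hh.le.trans hρ1)]
    have hsub : {x ∈ Ω | x + h ∉ Ω} ⊆
        ⋃ i ∈ T, {y ∈ ball i (2 * r i) | |g i y| ≤ K i * ‖h‖} := by
      rintro x ⟨hx, hxh⟩
      have hseg : (segment ℝ x (x + h) ∩ frontier Ω).Nonempty := by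
        by_contra hne
        rw [not_nonempty_iff_eq_empty] at hne
        have hnf : ∀ z ∈ segment ℝ x (x + h), z ∉ frontier Ω := fun z hz hf => by
          have : z ∈ segment ℝ x (x + h) ∩ frontier Ω := ⟨hz, hf⟩
          rw [hne] at this
          exact this
        have key : ∀ z ∈ segment ℝ x (x + h), z ∈ closure Ω → z ∈ interior Ω := by
          intro z hz hc
          by_contra hi
          exact hnf z hz ⟨hc, hi⟩
        obtain ⟨z, hz, hz1, hz2⟩ := (convex_segment (𝕜 := ℝ) x (x + h)).isPreconnected
          (interior Ω) (closure Ω)ᶜ isOpen_interior isClosed_closure.isOpen_compl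
          (fun z hz => by
            by_cases hc : z ∈ closure Ω
            · exact Or.inl (key z hz hc)
            · exact Or.inr hc)
          ⟨x, left_mem_segment _ _ _, key x (left_mem_segment _ _ _) (subset_closure hx)⟩
          ⟨x + h, right_mem_segment _ _ _, fun hc =>
            hxh (interior_subset (key _ (right_mem_segment _ _ _) hc))⟩
        exact hz2 (subset_closure (interior_subset hz1))
      obtain ⟨p, hp, hpf⟩ := hseg
      have hxp : dist x p ≤ ‖h‖ := by
        have := segment_subset_closedBall_left x (x + h) hp
        rw [mem_closedBall, dist_comm] at this
        simpa [dist_eq_norm] using this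
      have := hcov hpf
      simp only [mem_iUnion] at this
      obtain ⟨i, hi, hpi⟩ := this
      simp only [mem_iUnion]
      rw [mem_ball] at hpi
      have hr' := hρT i hi
      have hrp := hr i (hT i hi)
      refine ⟨i, hi, ?_, ?_⟩
      · rw [mem_ball]
        have := dist_triangle x p i
        linarith
      · have h0 := (hfr i (hT i hi) p (by rw [mem_ball]; linarith)).1 hpf
        have := (hg i (hT i hi)).dist_le_mul x p
        rw [Real.dist_eq, h0, sub_zero] at this
        exact this.trans (mul_le_mul_of_nonneg_left hxp (K i).2)
    refine (measure_mono hsub).trans ((measure_biUnion_finset_le T _).trans ?_)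
    calc ∑ i ∈ T, volume {y ∈ ball i (2 * r i) | |g i y| ≤ K i * ‖h‖}
        ≤ ∑ i ∈ T, (ENNReal.ofReal (2 * K i) * volume (ball i (2 * r i + 1)))
            * ENNReal.ofReal ‖h‖ := by
          apply Finset.sum_le_sum
          intro i hi
          refine (tube (he i (hT i hi)) (hg i (hT i hi)).continuous (hgt i (hT i hi)) i
            (2 * r i) (K i * ‖h‖)).trans ?_
          rw [← mul_assoc, ENNReal.ofReal_mul (by positivity), mul_right_comm]
      _ = C1 * ENNReal.ofReal ‖h‖ := by rw [← Finset.sum_mul]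
      _ ≤ _ := by gcongr; exact le_self_add
  · push Not at hh
    calc volume {x ∈ Ω | x + h ∉ Ω} ≤ volume Ω := measure_mono fun x hx => hx.1
      _ = volume Ω * ENNReal.ofReal (1 / ρ) * ENNReal.ofReal ρ := by
          rw [mul_assoc, ← ENNReal.ofReal_mul (by positivity), one_div, inv_mul_cancel₀ hρ0.ne']
          simp
      _ ≤ (C1 + C2) * ENNReal.ofReal (min ‖h‖ 1) := by
          gcongr
          · exact le_add_self
          · exact le_min hh hρ1

lemma kernel_fin (n : ℕ) (hn : 1 ≤ n) (s : ℝ) (hs : s ∈ Ioo (0 : ℝ) 1) :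
    ∫⁻ h : EuclideanSpace ℝ (Fin n), ENNReal.ofReal (min ‖h‖ 1) *
      ENNReal.ofReal (‖h‖ ^ (-((n : ℝ) + s))) ≠ ∞ := by
  have : Nontrivial (EuclideanSpace ℝ (Fin n)) := by
    have : Nonempty (Fin n) := ⟨⟨0, hn⟩⟩
    infer_instance
  have hIntg : Integrable (fun h : EuclideanSpace ℝ (Fin n) =>
      (fun r : ℝ => min r 1 * r ^ (-((n : ℝ) + s))) ‖h‖) := by
    apply (integrable_fun_norm_addHaar (volume : Measure (EuclideanSpace ℝ (Fin n)))
      (f := fun r : ℝ => min r 1 * r ^ (-((n : ℝ) + s)))).2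
    rw [finrank_euclideanSpace_fin]
    have hpow : ∀ y : ℝ, 0 < y → y ^ (n - 1) * y ^ (-((n : ℝ) + s)) = y ^ (-1 - s) := by
      intro y hy
      rw [← Real.rpow_natCast, ← Real.rpow_add hy]
      congr 1
      push_cast [hn]
      ring
    rw [← Ioc_union_Ioi_eq_Ioi (zero_le_one' ℝ)]
    apply IntegrableOn.union
    · have h1 : IntegrableOn (fun y : ℝ => y ^ (-s)) (Ioc 0 1) := by
        rw [← intervalIntegrable_iff_integrableOn_Ioc_of_le zero_le_one]
        exact intervalIntegral.intervalIntegrable_rpow' (by linarith [hs.2])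
      refine h1.congr_fun ?_ measurableSet_Ioc
      intro y hy
      simp only [smul_eq_mul]
      rw [min_eq_left hy.2, mul_left_comm, hpow y hy.1, mul_comm, ← Real.rpow_add_one hy.1.ne']
      congr 1; ring
    · have h1 : IntegrableOn (fun y : ℝ => y ^ (-1 - s)) (Ioi 1) :=
        integrableOn_Ioi_rpow_of_lt (by linarith [hs.1]) one_pos
      refine h1.congr_fun ?_ measurableSet_Ioi
      intro y hy
      have hy' : (1 : ℝ) < y := hy
      simp only [smul_eq_mul]
      rw [min_eq_right hy'.le, one_mul, hpow y (by linarith)]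
  have h2 := hIntg.lintegral_lt_top
  refine ne_of_lt (lt_of_eq_of_lt ?_ h2)
  congr 1; ext h
  rw [ENNReal.ofReal_mul (by positivity)]

lemma Ls_translate {n : ℕ} {s : ℝ} {A B : Set (EuclideanSpace ℝ (Fin n))} (hA : MeasurableSet A)
    (hB : MeasurableSet B) : Ls n s A B =
    ∫⁻ h, volume {x ∈ A | x + h ∈ B} * ENNReal.ofReal (‖h‖ ^ (-((n : ℝ) + s))) := by
  have hm : Measurable (fun p : EuclideanSpace ℝ (Fin n) × EuclideanSpace ℝ (Fin n) =>
      A.indicator (fun _ => (1 : ℝ≥0∞)) p.1 * (B.indicator (fun _ => (1 : ℝ≥0∞)) (p.1 + p.2) *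
        ENNReal.ofReal (‖p.2‖ ^ (-((n : ℝ) + s))))) := by
    apply Measurable.mul
    · exact (measurable_const.indicator hA).comp measurable_fst
    · apply Measurable.mul
      · exact (measurable_const.indicator hB).comp (measurable_fst.add measurable_snd)
      · exact ENNReal.measurable_ofReal.comp (measurable_snd.norm.pow_const _)
  calc Ls n s A B = ∫⁻ x, A.indicator (fun _ => (1 : ℝ≥0∞)) x * ∫⁻ y,
        B.indicator (fun _ => (1 : ℝ≥0∞)) y * ENNReal.ofReal (dist x y ^ (-((n : ℝ) + s))) := by
        unfold Ls
        rw [← lintegral_indicator hA]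
        congr 1; ext x
        by_cases hx : x ∈ A
        · simp only [indicator_of_mem hx, one_mul]
          rw [← lintegral_indicator hB]
          congr 1; ext y
          by_cases hy : y ∈ B <;> simp [hy]
        · simp [hx]
    _ = ∫⁻ x, ∫⁻ h, A.indicator (fun _ => (1 : ℝ≥0∞)) x * (B.indicator (fun _ => (1 : ℝ≥0∞)) (x + h) *
        ENNReal.ofReal (‖h‖ ^ (-((n : ℝ) + s)))) := by
        congr 1; ext x
        rw [lintegral_const_mul']
        · congr 1
          rw [← lintegral_add_left_eq_self _ x]
          congr 1; ext h
          simp [dist_eq_norm]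
        · by_cases hx : x ∈ A <;> simp [hx]
    _ = ∫⁻ h, ∫⁻ x, A.indicator (fun _ => (1 : ℝ≥0∞)) x * (B.indicator (fun _ => (1 : ℝ≥0∞)) (x + h) *
        ENNReal.ofReal (‖h‖ ^ (-((n : ℝ) + s)))) := lintegral_lintegral_swap hm.aemeasurable
    _ = _ := by
        congr 1; ext h
        simp_rw [← mul_assoc]
        rw [lintegral_mul_const' _ _ ENNReal.ofReal_ne_top]
        congr 1
        have hS : MeasurableSet {x ∈ A | x + h ∈ B} :=
          hA.inter ((measurable_add_const h) hB)
        rw [← one_mul (volume _), ← lintegral_indicator_const hS]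
        congr 1; ext x
        by_cases hx : x ∈ A <;> by_cases hy : x + h ∈ B <;> simp [hx, hy]

lemma Ls_compl_fin (n : ℕ) (hn : 1 ≤ n) (s : ℝ) (hs : s ∈ Ioo (0 : ℝ) 1)
    {Ω : Set (EuclideanSpace ℝ (Fin n))} (hb : IsBounded Ω) (ho : IsOpen Ω)
    (hΩ : HasLipschitzBoundary Ω) : Ls n s Ω Ωᶜ ≠ ∞ := by
  obtain ⟨C, hC, h⟩ := translate_est hb hΩ
  rw [Ls_translate ho.measurableSet ho.measurableSet.compl]
  refine ne_top_of_le_ne_top (ENNReal.mul_ne_top hC (kernel_fin n hn s hs)) ?_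
  rw [← lintegral_const_mul' _ _ hC]
  apply lintegral_mono
  intro x
  simp only
  rw [← mul_assoc]
  gcongr
  exact h x

lemma Ls_symm (n : ℕ) (s : ℝ) (A B : Set (EuclideanSpace ℝ (Fin n))) :
    Ls n s A B = Ls n s B A := by
  unfold Ls
  rw [lintegral_lintegral_swap]
  · simp_rw [dist_comm]
  · exact (measurable_kk n s).aemeasurable

/-- a map quantitatively close to the identity -/
structure Good {n : ℕ} (q : ℝ) (Φ : EuclideanSpace ℝ (Fin n) → EuclideanSpace ℝ (Fin n)) : Prop where
  meas : Measurable Φ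
  inj : Function.Injective Φ
  lip : ∀ x y, dist (Φ x) (Φ y) ≤ (1 + q) * dist x y
  vol : ∀ B, volume (Φ ⁻¹' B) ≤ ENNReal.ofReal (1 + q) * volume B
  close : ∀ x, ‖Φ x - x‖ ≤ 2 * q

lemma exists_deform {n : ℕ} {Ω : Set (EuclideanSpace ℝ (Fin n))} (hb : IsBounded Ω) (ho : IsOpen Ω)
    (hΩ : HasLipschitzBoundary Ω) (q : ℝ) (hq : 0 < q) :
    ∃ (Ψ : EuclideanSpace ℝ (Fin n) → EuclideanSpace ℝ (Fin n)) (δ : ℝ), ContDiff ℝ (⊤ : ℕ∞) Ψ ∧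
      0 < δ ∧ ∀ t, ‖t‖ < δ → Good q (fun x => Ψ x - t) ∧ MapsTo (fun x => Ψ x - t) Ω Ω := by
  obtain ⟨V, K, M, ε₀, hVs, hVL, hVM, hε₀, hV⟩ := field hb ho hΩ
  -- the volume estimate
  have hm : ((Real.toNNReal (1 + q))⁻¹ : ℝ≥0) < 1 := by
    apply inv_lt_one_of_one_lt₀
    rw [← Real.toNNReal_one]
    exact (Real.toNNReal_lt_toNNReal_iff (by linarith)).2 (by linarith)
  have hev := mul_le_addHaar_image_of_lt_det (volume : Measure (EuclideanSpace ℝ (Fin n)))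
    (ContinuousLinearMap.id ℝ (EuclideanSpace ℝ (Fin n))) (m := (Real.toNNReal (1 + q))⁻¹)
    (by
      have h1 : (ContinuousLinearMap.id ℝ (EuclideanSpace ℝ (Fin n))).det = 1 := LinearMap.det_id
      rw [h1, abs_one, ENNReal.ofReal_one]
      exact_mod_cast hm)
  obtain ⟨η, hη1, hη2⟩ := (hev.and (Ioo_mem_nhdsGT (show (0 : ℝ≥0) < min 1 (Real.toNNReal q) by
    simpa using hq))).exists
  obtain ⟨hη0, hηlt⟩ := hη2
  have hηlt1 : (η : ℝ) < 1 := by exact_mod_cast hηlt.trans_le (min_le_left _ _)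
  have hηq : (η : ℝ) < q := by
    have := hηlt.trans_le (min_le_right _ _)
    rw [← Real.coe_toNNReal q hq.le]; exact_mod_cast this
  have hη0' : (0 : ℝ) < η := by exact_mod_cast hη0
  -- choose ε
  have hM0 : 0 ≤ M := (norm_nonneg _).trans (hVM 0)
  obtain ⟨ε, hε0, hε1, hε2, hε3⟩ : ∃ ε : ℝ, 0 < ε ∧ ε < ε₀ ∧ ε * K ≤ η ∧ ε * M ≤ q := by
    refine ⟨min (ε₀ / 2) (min (η / (K + 1)) (q / (M + 1))), by positivity, ?_, ?_, ?_⟩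
    · exact (min_le_left _ _).trans_lt (by linarith)
    · have : min (ε₀ / 2) (min (η / (K + 1)) (q / (M + 1))) ≤ η / (K + 1 : ℝ) :=
        (min_le_right _ _).trans (min_le_left _ _)
      calc _ ≤ η / (K + 1 : ℝ) * (K + 1) := by
            apply mul_le_mul this _ K.2 (by positivity)
            exact le_add_of_nonneg_right zero_le_one
        _ = η := by field_simp
    · have : min (ε₀ / 2) (min (η / (K + 1)) (q / (M + 1))) ≤ q / (M + 1 : ℝ) :=
        (min_le_right _ _).trans (min_le_right _ _)
      calc _ ≤ q / (M + 1 : ℝ) * (M + 1) := by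
            apply mul_le_mul this _ hM0 (by positivity)
            exact le_add_of_nonneg_right zero_le_one
        _ = q := by field_simp
  set Ψ : EuclideanSpace ℝ (Fin n) → EuclideanSpace ℝ (Fin n) := fun x => x + ε • V x with hΨ
  have hΨs : ContDiff ℝ (⊤ : ℕ∞) Ψ := contDiff_id.add (hVs.const_smul ε)
  -- the compact image
  have hcK : IsCompact (Ψ '' closure Ω) :=
    (Metric.isCompact_of_isClosed_isBounded isClosed_closure hb.closure).image hΨs.continuous
  have hsub : Ψ '' closure Ω ⊆ Ω := by
    rintro _ ⟨x, hx, rfl⟩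
    exact hV ε hε0 hε1 x hx
  obtain ⟨δ, hδ, hδΩ⟩ := hcK.exists_thickening_subset_open ho hsub
  refine ⟨Ψ, min δ q, hΨs, lt_min hδ hq, ?_⟩
  intro t ht
  have happ : ∀ x y, ‖(Ψ x - t) - (Ψ y - t) - (x - y)‖ ≤ η * ‖x - y‖ := by
    intro x y
    have : (Ψ x - t) - (Ψ y - t) - (x - y) = ε • (V x - V y) := by
      simp only [hΨ, smul_sub]; abel
    rw [this, norm_smul, Real.norm_of_nonneg hε0.le]
    calc ε * ‖V x - V y‖ ≤ ε * (K * ‖x - y‖) := by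
          gcongr
          simpa [dist_eq_norm] using hVL.dist_le_mul x y
      _ = (ε * K) * ‖x - y‖ := by ring
      _ ≤ _ := by gcongr
  have hinj : Function.Injective (fun x => Ψ x - t) := by
    intro x y hxy
    have := happ x y
    simp only at hxy
    rw [hxy, sub_self, zero_sub, norm_neg] at this
    have h3 : ‖x - y‖ ≤ 0 := by nlinarith [norm_nonneg (x - y)]
    exact sub_eq_zero.1 (norm_le_zero_iff.1 h3)
  refine ⟨⟨?_, hinj, ?_, ?_, ?_⟩, ?_⟩
  · exact (hΨs.continuous.sub continuous_const).measurable
  · intro x y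
    rw [dist_eq_norm, dist_eq_norm]
    calc ‖(Ψ x - t) - (Ψ y - t)‖ = ‖((Ψ x - t) - (Ψ y - t) - (x - y)) + (x - y)‖ := by
          congr 1; abel
      _ ≤ η * ‖x - y‖ + ‖x - y‖ := (norm_add_le _ _).trans (by gcongr; exact happ x y)
      _ ≤ (1 + q) * ‖x - y‖ := by nlinarith [norm_nonneg (x - y)]
  · intro B
    have h1 := hη1 ((fun x => Ψ x - t) ⁻¹' B) (fun x => Ψ x - t) (by
      intro x _ y _
      exact happ x y)
    have h2 := h1.trans (measure_mono (image_preimage_subset _ _))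
    have hne : Real.toNNReal (1 + q) ≠ 0 := by
      have : 0 < Real.toNNReal (1 + q) := Real.toNNReal_pos.2 (by linarith)
      exact this.ne'
    rw [ENNReal.coe_inv hne] at h2
    change volume _ ≤ (Real.toNNReal (1 + q) : ℝ≥0∞) * _
    calc volume ((fun x => Ψ x - t) ⁻¹' B) = (Real.toNNReal (1 + q) : ℝ≥0∞) *
          ((Real.toNNReal (1 + q) : ℝ≥0∞)⁻¹ * volume ((fun x => Ψ x - t) ⁻¹' B)) := by
          rw [← mul_assoc, ENNReal.mul_inv_cancel (by exact_mod_cast hne) ENNReal.coe_ne_top, one_mul]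
      _ ≤ _ := by gcongr
  · intro x
    have : Ψ x - t - x = ε • V x - t := by simp only [hΨ]; abel
    rw [this]
    have h2 : ‖ε • V x‖ ≤ q := by
      rw [norm_smul, Real.norm_of_nonneg hε0.le]
      exact (mul_le_mul_of_nonneg_left (hVM x) hε0.le).trans hε3
    have h3 := ht.trans_le (min_le_right _ _)
    have h4 := norm_sub_le (ε • V x) t
    linarith
  · intro x hx
    apply hδΩ
    rw [mem_thickening_iff]
    refine ⟨Ψ x, mem_image_of_mem _ (subset_closure hx), ?_⟩
    simp only [dist_eq_norm, sub_sub_cancel_left, norm_neg]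
    exact ht.trans_le (min_le_left _ _)

lemma Good.lintegral_le {n : ℕ} {q : ℝ} {Φ : EuclideanSpace ℝ (Fin n) → EuclideanSpace ℝ (Fin n)}
    (h : Good q Φ) {Ω : Set (EuclideanSpace ℝ (Fin n))} (hΩ : MeasurableSet Ω)
    (hm : MapsTo Φ Ω Ω) {G : EuclideanSpace ℝ (Fin n) → ℝ≥0∞}
    (hG : Measurable G) :
    ∫⁻ x in Ω, G (Φ x) ≤ ENNReal.ofReal (1 + q) * ∫⁻ x in Ω, G x := by
  rw [← lintegral_map hG h.meas, ← smul_eq_mul, ← lintegral_smul_measure]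
  apply lintegral_mono'
  · rw [Measure.le_iff]
    intro B hB
    rw [Measure.map_apply h.meas hB, Measure.restrict_apply (h.meas hB), Measure.smul_apply,
      Measure.restrict_apply hB, smul_eq_mul]
    refine le_trans (measure_mono ?_) (h.vol (B ∩ Ω))
    rintro x ⟨hx1, hx2⟩
    exact ⟨hx1, hm hx2⟩
  · exact le_rfl

lemma Good.lintegral_le₂ {n : ℕ} {q : ℝ} {Φ : EuclideanSpace ℝ (Fin n) → EuclideanSpace ℝ (Fin n)}
    (h : Good q Φ) {Ω : Set (EuclideanSpace ℝ (Fin n))} (hΩ : MeasurableSet Ω)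
    (hm : MapsTo Φ Ω Ω) {G : EuclideanSpace ℝ (Fin n) × EuclideanSpace ℝ (Fin n) → ℝ≥0∞}
    (hG : Measurable G) :
    ∫⁻ p in Ω ×ˢ Ω, G (Φ p.1, Φ p.2) ≤
      ENNReal.ofReal (1 + q) * (ENNReal.ofReal (1 + q) * ∫⁻ p in Ω ×ˢ Ω, G p) := by
  have hG2 : Measurable (fun p : EuclideanSpace ℝ (Fin n) × EuclideanSpace ℝ (Fin n) =>
      G (Φ p.1, Φ p.2)) :=
    hG.comp ((h.meas.comp measurable_fst).prodMk (h.meas.comp measurable_snd))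
  rw [Measure.volume_eq_prod, ← Measure.prod_restrict, lintegral_prod _ hG2.aemeasurable,
    lintegral_prod _ hG.aemeasurable]
  calc ∫⁻ x in Ω, ∫⁻ y in Ω, G (Φ x, Φ y)
      ≤ ∫⁻ x in Ω, ENNReal.ofReal (1 + q) * ∫⁻ y in Ω, G (Φ x, y) := by
        apply lintegral_mono
        intro x
        exact h.lintegral_le hΩ hm (G := fun y => G (Φ x, y)) (hG.comp measurable_prodMk_left)
    _ = ENNReal.ofReal (1 + q) * ∫⁻ x in Ω, ∫⁻ y in Ω, G (Φ x, y) :=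
        lintegral_const_mul' _ _ ENNReal.ofReal_ne_top
    _ ≤ _ := by
        gcongr
        exact h.lintegral_le hΩ hm (G := fun x => ∫⁻ y in Ω, G (x, y)) hG.lintegral_prod_right'

lemma Good.kk_le {n : ℕ} {s : ℝ} (hs : 0 < s) {q : ℝ} (hq : 0 < q)
    {Φ : EuclideanSpace ℝ (Fin n) → EuclideanSpace ℝ (Fin n)}
    (h : Good q Φ) (p : EuclideanSpace ℝ (Fin n) × EuclideanSpace ℝ (Fin n)) :
    kk n s p ≤ ENNReal.ofReal ((1 + q) ^ ((n : ℝ) + s)) * kk n s (Φ p.1, Φ p.2) := by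
  unfold kk
  have hns : 0 < (n : ℝ) + s := by positivity
  rw [← ENNReal.ofReal_mul (by positivity)]
  apply ENNReal.ofReal_le_ofReal
  simp only
  by_cases hp : p.1 = p.2
  · rw [hp, dist_self, dist_self, Real.zero_rpow (by linarith)]; simp
  · have h1 : 0 < dist (Φ p.1) (Φ p.2) := dist_pos.2 fun hh => hp (h.inj hh)
    have h2 := h.lip p.1 p.2
    have h3 : dist (Φ p.1) (Φ p.2) / (1 + q) ≤ dist p.1 p.2 := by
      rw [div_le_iff₀ (by positivity)]; linarith
    have h4 := Real.rpow_le_rpow_of_nonpos (by positivity) h3 (show -((n : ℝ) + s) ≤ 0 by linarith)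
    refine h4.trans (le_of_eq ?_)
    rw [Real.div_rpow h1.le (by positivity), Real.rpow_neg (by positivity : (0:ℝ) ≤ 1 + q), div_inv_eq_mul,
      mul_comm]

lemma close_in_measure {n : ℕ} {E : Set (EuclideanSpace ℝ (Fin n))} (hE : MeasurableSet E)
    (R : ℝ) (κ : ℝ≥0∞) (hκ : κ ≠ 0) :
    ∃ ρ : ℝ, 0 < ρ ∧ ∀ Φ : EuclideanSpace ℝ (Fin n) → EuclideanSpace ℝ (Fin n),
      (∀ B, volume (Φ ⁻¹' B) ≤ 2 * volume B) → (∀ x, ‖Φ x - x‖ ≤ ρ) →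
      volume {x ∈ ball 0 R | ¬ (Φ x ∈ E ↔ x ∈ E)} ≤ κ := by
  have hfin : ∀ S : Set (EuclideanSpace ℝ (Fin n)), volume (S ∩ ball 0 (R + 1)) ≠ ∞ := fun S =>
    ((measure_mono inter_subset_right).trans_lt measure_ball_lt_top).ne
  have hκ6 : κ / 6 ≠ 0 := by simp [hκ]
  obtain ⟨K1, hK1s, hK1, hK1v⟩ :=
    (hE.inter (measurableSet_ball (x := 0) (ε := R + 1))).exists_isCompact_sdiff_lt (hfin E) hκ6
  obtain ⟨K2, hK2s, hK2, hK2v⟩ :=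
    (hE.compl.inter (measurableSet_ball (x := 0) (ε := R + 1))).exists_isCompact_sdiff_lt (hfin Eᶜ) hκ6
  have hdisj : Disjoint K1 K2 := by
    rw [Set.disjoint_left]
    intro x h1 h2
    exact (hK2s h2).1 (hK1s h1).1
  obtain ⟨δ, hδ, hδd⟩ := hdisj.exists_thickenings hK1 hK2.isClosed
  refine ⟨min (δ / 2) (1 / 2), by positivity, fun Φ hv hc => ?_⟩
  set N := ((E ∩ ball 0 (R + 1)) \ K1) ∪ ((Eᶜ ∩ ball 0 (R + 1)) \ K2) with hN
  have hNv : volume N ≤ κ / 6 + κ / 6 :=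
    (measure_union_le _ _).trans (add_le_add hK1v.le hK2v.le)
  have hsub : {x ∈ ball 0 R | ¬ (Φ x ∈ E ↔ x ∈ E)} ⊆ N ∪ Φ ⁻¹' N := by
    rintro x ⟨hx, hxE⟩
    rw [mem_ball, dist_zero_right] at hx
    have hd := hc x
    have hd1 := hd.trans (min_le_left _ _)
    have hd2 := hd.trans (min_le_right _ _)
    have hxB : x ∈ ball (0 : EuclideanSpace ℝ (Fin n)) (R + 1) := by
      rw [mem_ball, dist_zero_right]; linarith
    have hΦB : Φ x ∈ ball (0 : EuclideanSpace ℝ (Fin n)) (R + 1) := by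
      rw [mem_ball, dist_zero_right]
      have := norm_add_le (Φ x - x) x
      rw [sub_add_cancel] at this
      linarith
    by_contra hcon
    simp only [mem_union, mem_preimage, hN, Set.mem_sdiff, mem_inter_iff, hxB, hΦB, mem_compl_iff, and_true] at hcon
    have h3 : (x ∈ K1 ∧ Φ x ∈ K2) ∨ (x ∈ K2 ∧ Φ x ∈ K1) := by tauto
    have hdist : dist x (Φ x) < δ := by rw [dist_comm, dist_eq_norm]; linarith
    rcases h3 with ⟨ha, hb⟩ | ⟨ha, hb⟩
    · exact Set.disjoint_left.1 hδd (self_subset_thickening hδ _ ha)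
        (mem_thickening_iff.2 ⟨_, hb, hdist⟩)
    · exact Set.disjoint_left.1 hδd (mem_thickening_iff.2 ⟨_, hb, hdist⟩)
        (self_subset_thickening hδ _ ha)
  calc _ ≤ volume (N ∪ Φ ⁻¹' N) := measure_mono hsub
    _ ≤ volume N + 2 * volume N := (measure_union_le _ _).trans (by gcongr; exact hv N)
    _ = 3 * volume N := by ring
    _ ≤ 3 * (κ / 6 + κ / 6) := by gcongr
    _ = 6 * (κ / 6) := by ring
    _ = κ := ENNReal.mul_div_cancel (by simp) (by simp)

lemma ofReal_integral_le' {α : Type*} [MeasurableSpace α] {μ : Measure α} {f : α → ℝ}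
    (hf : Integrable f μ) : ENNReal.ofReal (∫ x, f x ∂μ) ≤ ∫⁻ x, ENNReal.ofReal (f x) ∂μ := by
  rw [integral_eq_lintegral_pos_part_sub_lintegral_neg_part hf]
  refine (ENNReal.ofReal_le_ofReal (sub_le_self _ ENNReal.toReal_nonneg)).trans ?_
  exact ENNReal.ofReal_toReal_le

lemma approx_fun (n : ℕ) (s : ℝ) (hs : 0 < s)
    {Ω : Set (EuclideanSpace ℝ (Fin n))} (hb : IsBounded Ω) (ho : IsOpen Ω)
    (hΩ : HasLipschitzBoundary Ω) {E : Set (EuclideanSpace ℝ (Fin n))} (hE : MeasurableSet E)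
    (hfin : Ls n s (E ∩ Ω) (Eᶜ ∩ Ω) ≠ ∞) (R : ℝ) (κ : ℝ≥0∞) (hκ : κ ≠ 0) :
    ∃ u : EuclideanSpace ℝ (Fin n) → ℝ, ContDiff ℝ (⊤ : ℕ∞) u ∧
      ∫⁻ p in Ω ×ˢ Ω, ENNReal.ofReal (u p.1 - u p.2) * kk n s p ≤
        Ls n s (E ∩ Ω) (Eᶜ ∩ Ω) + κ ∧
      ∫⁻ x in ball 0 R, ENNReal.ofReal |u x - E.indicator (fun _ => (1 : ℝ)) x| ≤ κ := by
  obtain ⟨ρ, hρ, hclose⟩ := close_in_measure hE R κ hκ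
  set A := Ls n s (E ∩ Ω) (Eᶜ ∩ Ω) with hA
  -- choose q
  obtain ⟨q, hq0, hq1, hqρ, hqA⟩ : ∃ q : ℝ, 0 < q ∧ q ≤ 1 ∧ 2 * q ≤ ρ ∧
      ENNReal.ofReal ((1 + q) * (1 + q) * (1 + q) ^ ((n : ℝ) + s)) * A ≤ A + κ := by
    have hcont : Tendsto (fun q : ℝ => ENNReal.ofReal ((1 + q) * (1 + q) * (1 + q) ^ ((n : ℝ) + s)) * A)
        (𝓝 0) (𝓝 (1 * A)) := by
      apply ENNReal.Tendsto.mul_const _ (Or.inr hfin)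
      rw [← ENNReal.ofReal_one]
      apply ENNReal.tendsto_ofReal
      have : ContinuousAt (fun q : ℝ => (1 + q) * (1 + q) * (1 + q) ^ ((n : ℝ) + s)) 0 := by
        apply ContinuousAt.mul (by fun_prop)
        apply ContinuousAt.rpow_const (by fun_prop)
        left; norm_num
      simpa [ContinuousAt] using this
    rw [one_mul] at hcont
    have hlt : A < A + κ := ENNReal.lt_add_right hfin hκ
    have h1 := (hcont.eventually_le_const hlt).filter_mono (nhdsWithin_le_nhds (s := Ioi 0))
    obtain ⟨q, h1, h2⟩ := (h1.and (Ioo_mem_nhdsGT (show (0 : ℝ) < min 1 (ρ / 2) by positivity))).exists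
    refine ⟨q, h2.1, h2.2.le.trans (min_le_left _ _), ?_, h1⟩
    have := h2.2.le.trans (min_le_right _ _)
    linarith
  obtain ⟨Ψ, δ, hΨ, hδ, hgood⟩ := exists_deform hb ho hΩ q hq0
  let φ : ContDiffBump (0 : EuclideanSpace ℝ (Fin n)) := ⟨δ / 2, δ, by positivity, by linarith⟩
  set w := φ.normed volume with hw
  set χ : EuclideanSpace ℝ (Fin n) → ℝ := E.indicator (fun _ => (1 : ℝ)) with hχ
  have hχm : Measurable χ := measurable_const.indicator hE
  have hχb : ∀ x, ‖χ x‖ ≤ 1 := by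
    intro x
    by_cases hx : x ∈ E <;> simp [hχ, hx]
  have hχloc : LocallyIntegrable χ := by
    exact (locallyIntegrable_const (1 : ℝ)).indicator hE
  have hw0 : ∀ t, 0 ≤ w t := φ.nonneg_normed
  have hwint : Integrable w := φ.integrable_normed
  have hwsupp : ∀ t, w t ≠ 0 → ‖t‖ < δ := by
    intro t ht
    have : t ∈ Function.support w := ht
    rw [hw, φ.support_normed_eq] at this
    simpa using this
  have hw1 : ∫⁻ t, ENNReal.ofReal (w t) = 1 := by
    rw [← ofReal_integral_eq_lintegral_ofReal hwint (ae_of_all _ hw0), hw, φ.integral_normed,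
      ENNReal.ofReal_one]
  have hwm : Measurable w := φ.continuous_normed.measurable
  set v : EuclideanSpace ℝ (Fin n) → ℝ := fun z => ∫ t, w t * χ (z - t) with hv
  have hvs : ContDiff ℝ (⊤ : ℕ∞) v :=
    φ.hasCompactSupport_normed.contDiff_convolution_left (μ := volume) (ContinuousLinearMap.lsmul ℝ ℝ)
      φ.contDiff_normed hχloc
  have hIntg : ∀ z, Integrable (fun t => w t * χ (z - t)) := by
    intro z
    apply hwint.mul_bdd (c := 1)
    · exact (hχm.comp (measurable_const.sub measurable_id)).aestronglyMeasurable
    · exact ae_of_all _ fun t => hχb _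
  refine ⟨v ∘ Ψ, hvs.comp hΨ, ?_, ?_⟩
  · -- energy
    set D : Set (EuclideanSpace ℝ (Fin n) × EuclideanSpace ℝ (Fin n)) := E ×ˢ Eᶜ with hD
    have hDm : MeasurableSet D := hE.prod hE.compl
    set one : EuclideanSpace ℝ (Fin n) × EuclideanSpace ℝ (Fin n) → ℝ≥0∞ :=
      D.indicator (fun _ => 1) with hone
    have honem : Measurable one := measurable_const.indicator hDm
    have hjen : ∀ p : EuclideanSpace ℝ (Fin n) × EuclideanSpace ℝ (Fin n),
        ENNReal.ofReal (v (Ψ p.1) - v (Ψ p.2)) ≤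
        ∫⁻ t, ENNReal.ofReal (w t) * one (Ψ p.1 - t, Ψ p.2 - t) := by
      intro p
      simp only [hv]
      rw [← integral_sub (hIntg _) (hIntg _)]
      refine (ofReal_integral_le' ((hIntg _).sub (hIntg _))).trans ?_
      apply lintegral_mono
      intro t
      simp only [Pi.sub_apply]
      rw [← mul_sub, ENNReal.ofReal_mul (hw0 t)]
      gcongr
      by_cases h1 : Ψ p.1 - t ∈ E <;> by_cases h2 : Ψ p.2 - t ∈ E <;>
        simp [hχ, hone, hD, h1, h2]
    have hΨm : Measurable Ψ := hΨ.continuous.measurable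
    have hA2 : ∫⁻ p in Ω ×ˢ Ω, one p * kk n s p = A := by
      rw [hA, Ls_eq_ind n s (hE.inter ho.measurableSet) (hE.compl.inter ho.measurableSet),
        ← lintegral_indicator (ho.measurableSet.prod ho.measurableSet)]
      congr 1; ext p
      by_cases h1 : p.1 ∈ E <;> by_cases h2 : p.2 ∈ E <;> by_cases h3 : p.1 ∈ Ω <;>
        by_cases h4 : p.2 ∈ Ω <;> simp [hone, hD, indicator, h1, h2, h3, h4]
    have hbound : ∀ t, ‖t‖ < δ → ∫⁻ p in Ω ×ˢ Ω, one (Ψ p.1 - t, Ψ p.2 - t) * kk n s p ≤ A + κ := by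
      intro t ht
      obtain ⟨hg, hmaps⟩ := hgood t ht
      calc ∫⁻ p in Ω ×ˢ Ω, one (Ψ p.1 - t, Ψ p.2 - t) * kk n s p
          ≤ ∫⁻ p in Ω ×ˢ Ω, ENNReal.ofReal ((1 + q) ^ ((n : ℝ) + s)) *
            (one (Ψ p.1 - t, Ψ p.2 - t) * kk n s (Ψ p.1 - t, Ψ p.2 - t)) := by
            apply lintegral_mono
            intro p
            simp only
            rw [mul_left_comm]
            gcongr
            exact hg.kk_le hs hq0 p
        _ = ENNReal.ofReal ((1 + q) ^ ((n : ℝ) + s)) * ∫⁻ p in Ω ×ˢ Ω,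
            (one (Ψ p.1 - t, Ψ p.2 - t) * kk n s (Ψ p.1 - t, Ψ p.2 - t)) :=
            lintegral_const_mul' _ _ ENNReal.ofReal_ne_top
        _ ≤ ENNReal.ofReal ((1 + q) ^ ((n : ℝ) + s)) *
            (ENNReal.ofReal (1 + q) * (ENNReal.ofReal (1 + q) * A)) := by
            gcongr
            rw [← hA2]
            exact hg.lintegral_le₂ ho.measurableSet hmaps (G := fun p => one p * kk n s p)
              (honem.mul (measurable_kk n s))
        _ = ENNReal.ofReal ((1 + q) * (1 + q) * (1 + q) ^ ((n : ℝ) + s)) * A := by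
            rw [ENNReal.ofReal_mul (by positivity), ENNReal.ofReal_mul (by positivity)]
            ring
        _ ≤ A + κ := hqA
    calc ∫⁻ p in Ω ×ˢ Ω, ENNReal.ofReal ((v ∘ Ψ) p.1 - (v ∘ Ψ) p.2) * kk n s p
        ≤ ∫⁻ p in Ω ×ˢ Ω, ∫⁻ t, ENNReal.ofReal (w t) * one (Ψ p.1 - t, Ψ p.2 - t) * kk n s p := by
          apply lintegral_mono
          intro p
          simp only
          rw [lintegral_mul_const']
          · gcongr
            exact hjen p
          · simp [kk]
      _ = ∫⁻ t, ∫⁻ p in Ω ×ˢ Ω, ENNReal.ofReal (w t) * one (Ψ p.1 - t, Ψ p.2 - t) * kk n s p := by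
          apply lintegral_lintegral_swap
          apply Measurable.aemeasurable
          apply Measurable.mul
          · apply Measurable.mul
            · exact ENNReal.measurable_ofReal.comp (hwm.comp measurable_snd)
            · apply honem.comp
              apply Measurable.prodMk
              · exact (hΨm.comp (measurable_fst.comp measurable_fst)).sub measurable_snd
              · exact (hΨm.comp (measurable_snd.comp measurable_fst)).sub measurable_snd
          · exact (measurable_kk n s).comp measurable_fst
      _ ≤ ∫⁻ t, ENNReal.ofReal (w t) * (A + κ) := by
          apply lintegral_mono
          intro t
          simp only [mul_assoc]
          rw [lintegral_const_mul' _ _ ENNReal.ofReal_ne_top]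
          by_cases ht : w t = 0
          · simp [ht]
          · gcongr
            exact hbound t (hwsupp t ht)
      _ = A + κ := by
          rw [lintegral_mul_const _ (show Measurable (fun t => ENNReal.ofReal (w t)) from
            ENNReal.measurable_ofReal.comp hwm), hw1, one_mul]
  · -- L1 closeness
    have hΨm : Measurable Ψ := hΨ.continuous.measurable
    set bad : EuclideanSpace ℝ (Fin n) × EuclideanSpace ℝ (Fin n) → ℝ≥0∞ :=
      fun p => ENNReal.ofReal |χ (Ψ p.1 - p.2) - χ p.1| with hbad
    have hbadm : Measurable bad := by
      apply ENNReal.measurable_ofReal.comp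
      have h1 : Measurable (fun p : EuclideanSpace ℝ (Fin n) × EuclideanSpace ℝ (Fin n) =>
        χ (Ψ p.1 - p.2)) := hχm.comp ((hΨm.comp measurable_fst).sub measurable_snd)
      have h2 : Measurable (fun p : EuclideanSpace ℝ (Fin n) × EuclideanSpace ℝ (Fin n) =>
        χ p.1) := hχm.comp measurable_fst
      exact (h1.sub h2).abs
    have hjen : ∀ x, ENNReal.ofReal |v (Ψ x) - χ x| ≤ ∫⁻ t, ENNReal.ofReal (w t) * bad (x, t) := by
      intro x
      have h1 : χ x = ∫ t, w t * χ x := by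
        rw [integral_mul_const, hw, φ.integral_normed, one_mul]
      have h2 : v (Ψ x) - χ x = ∫ t, w t * (χ (Ψ x - t) - χ x) := by
        conv_lhs => rw [h1]
        simp only [hv, mul_sub]
        rw [← integral_sub (hIntg _) (hwint.mul_const _)]
      rw [h2, ← Real.norm_eq_abs, ofReal_norm]
      refine (enorm_integral_le_lintegral_enorm _).trans (le_of_eq ?_)
      congr 1; ext t
      rw [enorm_mul, ← ofReal_norm, ← ofReal_norm, Real.norm_of_nonneg (hw0 t), Real.norm_eq_abs]
    have hbound : ∀ t, ‖t‖ < δ → ∫⁻ x in ball 0 R, bad (x, t) ≤ κ := by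
      intro t ht
      obtain ⟨hg, -⟩ := hgood t ht
      refine le_trans ?_ (hclose (fun x => Ψ x - t) (fun B => (hg.vol B).trans ?_)
        (fun x => (hg.close x).trans hqρ))
      · have hSm : MeasurableSet {x ∈ ball (0 : EuclideanSpace ℝ (Fin n)) R |
            ¬ (Ψ x - t ∈ E ↔ x ∈ E)} := by
          apply measurableSet_ball.inter
          apply MeasurableSet.compl
          have h1 : MeasurableSet ((fun x => Ψ x - t) ⁻¹' E) := hg.meas hE
          exact MeasurableSet.iff h1 hE
        rw [← one_mul (volume _), ← lintegral_indicator_const hSm,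
          ← lintegral_indicator measurableSet_ball]
        apply lintegral_mono
        intro x
        by_cases hx : x ∈ ball (0 : EuclideanSpace ℝ (Fin n)) R
        · by_cases h1 : Ψ x - t ∈ E <;> by_cases h2 : x ∈ E <;>
            simp_all [indicator, hbad, hχ]
        · simp only [indicator_of_notMem hx]; exact zero_le
      · gcongr
        rw [← ENNReal.ofReal_ofNat]
        apply ENNReal.ofReal_le_ofReal
        linarith
    calc ∫⁻ x in ball 0 R, ENNReal.ofReal |(v ∘ Ψ) x - χ x|
        ≤ ∫⁻ x in ball 0 R, ∫⁻ t, ENNReal.ofReal (w t) * bad (x, t) :=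
          lintegral_mono fun x => hjen x
      _ = ∫⁻ t, ∫⁻ x in ball 0 R, ENNReal.ofReal (w t) * bad (x, t) := by
          apply lintegral_lintegral_swap
          exact ((ENNReal.measurable_ofReal.comp (hwm.comp measurable_snd)).mul hbadm).aemeasurable
      _ ≤ ∫⁻ t, ENNReal.ofReal (w t) * κ := by
          apply lintegral_mono
          intro t
          simp only
          rw [lintegral_const_mul' _ _ ENNReal.ofReal_ne_top]
          by_cases ht : w t = 0
          · simp [ht]
          · gcongr
            exact hbound t (hwsupp t ht)
      _ = κ := by
          rw [lintegral_mul_const _ (show Measurable (fun t => ENNReal.ofReal (w t)) from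
            ENNReal.measurable_ofReal.comp hwm), hw1, one_mul]

lemma morse_pert {n : ℕ} {u : EuclideanSpace ℝ (Fin n) → ℝ} (hu : ContDiff ℝ (⊤ : ℕ∞) u)
    {θ : ℝ} (hθ : 0 < θ) : ∃ a : EuclideanSpace ℝ (Fin n), ‖a‖ < θ ∧
      volume ((fun x => u x - inner ℝ a x) ''
        {x | fderiv ℝ (fun x => u x - inner ℝ a x) x = 0}) = 0 := by
  set G : EuclideanSpace ℝ (Fin n) → EuclideanSpace ℝ (Fin n) :=
    fun x => (InnerProductSpace.toDual ℝ (EuclideanSpace ℝ (Fin n))).symm (fderiv ℝ u x) with hG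
  have hGd : Differentiable ℝ G := by
    have h1 : ContDiff ℝ 1 (fderiv ℝ u) := hu.fderiv_right (m := 1) (by norm_cast)
    have h2 : Differentiable ℝ (fderiv ℝ u) := h1.differentiable (by norm_num)
    exact (InnerProductSpace.toDual ℝ (EuclideanSpace ℝ (Fin n))).symm.differentiable.comp h2
  have hnull : volume (G '' {x | (fderiv ℝ G x).det = 0}) = 0 :=
    addHaar_image_eq_zero_of_det_fderivWithin_eq_zero volume
      (fun x _ => (hGd x).hasFDerivAt.hasFDerivWithinAt) (fun x hx => hx)
  obtain ⟨a, ha, haN⟩ : ∃ a ∈ ball (0 : EuclideanSpace ℝ (Fin n)) θ,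
      a ∉ G '' {x | (fderiv ℝ G x).det = 0} := by
    by_contra! hcon
    have : volume (ball (0 : EuclideanSpace ℝ (Fin n)) θ) = 0 :=
      measure_mono_null (fun x hx => hcon x hx) hnull
    exact (measure_ball_pos volume _ hθ).ne' this
  refine ⟨a, by simpa using ha, ?_⟩
  have hcrit : {x | fderiv ℝ (fun x => u x - inner ℝ a x) x = 0} ⊆ {x | G x = a} := by
    intro x hx
    simp only [mem_ofPred_eq] at hx ⊢
    have h1 : HasFDerivAt (fun x => u x - inner ℝ a x) (fderiv ℝ u x - innerSL ℝ a) x :=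
      ((hu.differentiable (by simp)) x).hasFDerivAt.sub ((innerSL ℝ a).hasFDerivAt)
    rw [h1.fderiv, sub_eq_zero] at hx
    simp only [hG, hx]
    rw [LinearIsometryEquiv.symm_apply_eq]
    ext y
    simp
  have hcount : {x | G x = a}.Countable := by
    obtain ⟨t, -, htc, hst⟩ := TopologicalSpace.countable_cover_nhdsWithin
      (f := fun x : EuclideanSpace ℝ (Fin n) => {x}) (s := {x | G x = a}) (by
        intro x hx
        have hdet : (fderiv ℝ G x).det ≠ 0 := fun h => haN ⟨x, h, hx⟩
        have hanti : ∃ C, AntilipschitzWith C (fderiv ℝ G x) := by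
          refine ⟨_, ((fderiv ℝ G x).toContinuousLinearEquivOfDetNeZero hdet).antilipschitz⟩
        have h := (hGd x).hasFDerivAt.eventually_ne (c := a) hanti
        rw [eventually_nhdsWithin_iff] at h
        rw [mem_nhdsWithin_iff_eventually]
        filter_upwards [h] with y hy hy'
        by_contra hne
        exact hy hne hy')
    exact htc.mono (hst.trans (by simp))
  exact ((hcount.mono hcrit).image _).measure_zero volume

lemma lin_kernel_fin (n : ℕ) (hn : 1 ≤ n) (s : ℝ) (hs : s ∈ Ioo (0 : ℝ) 1)
    {Ω : Set (EuclideanSpace ℝ (Fin n))} (hb : IsBounded Ω) (ho : IsOpen Ω) :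
    ∫⁻ p in Ω ×ˢ Ω, ENNReal.ofReal (dist p.1 p.2) * kk n s p ≠ ∞ := by
  obtain ⟨D, hD1, hD⟩ : ∃ D : ℝ, 1 ≤ D ∧ ∀ x ∈ Ω, ∀ y ∈ Ω, dist x y ≤ D := by
    obtain ⟨C, hC⟩ := isBounded_iff.1 hb
    exact ⟨max C 1, le_max_right _ _, fun x hx y hy => (hC hx hy).trans (le_max_left _ _)⟩
  set g : EuclideanSpace ℝ (Fin n) → ℝ≥0∞ := fun h => ENNReal.ofReal (min ‖h‖ 1) *
      ENNReal.ofReal (‖h‖ ^ (-((n : ℝ) + s))) with hg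
  have hK := kernel_fin n hn s hs
  have hgm : Measurable g := by
    rw [hg]; fun_prop
  have hfinal : ENNReal.ofReal D * (volume Ω * ∫⁻ h, g h) ≠ ∞ :=
    ENNReal.mul_ne_top ENNReal.ofReal_ne_top
      (ENNReal.mul_ne_top hb.measure_lt_top.ne hK)
  refine ne_top_of_le_ne_top hfinal ?_
  have hΩm := ho.measurableSet
  calc ∫⁻ p in Ω ×ˢ Ω, ENNReal.ofReal (dist p.1 p.2) * kk n s p
      ≤ ∫⁻ p in Ω ×ˢ Ω, ENNReal.ofReal D * g (p.2 - p.1) := by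
        apply setLIntegral_mono' (hΩm.prod hΩm)
        rintro ⟨x, y⟩ ⟨hx, hy⟩
        have hd := hD x hx y hy
        simp only at hx hy
        simp only [hg, kk]
        rw [← mul_assoc, ← ENNReal.ofReal_mul (p := D) (by linarith), ← dist_eq_norm, dist_comm y x]
        gcongr
        rcases le_total (dist x y) 1 with h | h
        · rw [min_eq_left h]; nlinarith [dist_nonneg (x := x) (y := y)]
        · rw [min_eq_right h]; linarith
    _ = ENNReal.ofReal D * ∫⁻ p in Ω ×ˢ Ω, g (p.2 - p.1) := by
        rw [lintegral_const_mul' _ _ ENNReal.ofReal_ne_top]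
    _ = ENNReal.ofReal D * ∫⁻ x in Ω, ∫⁻ y in Ω, g (y - x) := by
        rw [Measure.volume_eq_prod, ← Measure.prod_restrict, lintegral_prod]
        exact (hgm.comp (measurable_snd.sub measurable_fst)).aemeasurable
    _ ≤ ENNReal.ofReal D * ∫⁻ x in Ω, ∫⁻ h, g h := by
        refine mul_le_mul' le_rfl (lintegral_mono fun x => ?_)
        refine (setLIntegral_le_lintegral _ _).trans ?_
        rw [lintegral_sub_right_eq_self g x]
    _ = ENNReal.ofReal D * (volume Ω * ∫⁻ h, g h) := by
        rw [setLIntegral_const, mul_comm (volume Ω)]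

lemma coarea_le (n : ℕ) (s : ℝ) {Ω : Set (EuclideanSpace ℝ (Fin n))} (hΩ : MeasurableSet Ω)
    {f : EuclideanSpace ℝ (Fin n) → ℝ} (hf : Measurable f) :
    ∫⁻ t, Ls n s ({x | t < f x} ∩ Ω) ({x | t < f x}ᶜ ∩ Ω) ≤
      ∫⁻ p in Ω ×ˢ Ω, ENNReal.ofReal (f p.1 - f p.2) * kk n s p := by
  set S : Set (ℝ × (EuclideanSpace ℝ (Fin n) × EuclideanSpace ℝ (Fin n))) :=
    {q | q.1 < f q.2.1 ∧ f q.2.2 ≤ q.1 ∧ q.2.1 ∈ Ω ∧ q.2.2 ∈ Ω} with hS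
  have hSm : MeasurableSet S := by
    apply MeasurableSet.inter
    · exact measurableSet_lt measurable_fst (hf.comp (measurable_fst.comp measurable_snd))
    apply MeasurableSet.inter
    · exact measurableSet_le (hf.comp (measurable_snd.comp measurable_snd)) measurable_fst
    apply MeasurableSet.inter
    · exact (measurable_fst.comp measurable_snd) hΩ
    · exact (measurable_snd.comp measurable_snd) hΩ
  have h1 : ∀ t, Ls n s ({x | t < f x} ∩ Ω) ({x | t < f x}ᶜ ∩ Ω) =
      ∫⁻ p, S.indicator (fun q => kk n s q.2) (t, p) := by
    intro t
    have hm : MeasurableSet {x | t < f x} := measurableSet_lt measurable_const hf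
    rw [Ls_eq_ind n s (hm.inter hΩ) (hm.compl.inter hΩ)]
    congr 1
    ext p
    by_cases hp : (t, p) ∈ S
    · rw [indicator_of_mem hp, indicator_of_mem]
      simp only [hS, mem_ofPred_eq] at hp
      exact ⟨⟨hp.1, hp.2.2.1⟩, ⟨not_lt.2 hp.2.1, hp.2.2.2⟩⟩
    · rw [indicator_of_notMem hp, indicator_of_notMem]
      rintro ⟨⟨h1, h2⟩, ⟨h3, h4⟩⟩
      exact hp ⟨h1, not_lt.1 h3, h2, h4⟩
  simp_rw [h1]
  rw [lintegral_lintegral_swap]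
  swap
  · exact (((measurable_kk n s).comp measurable_snd).indicator hSm).aemeasurable
  rw [← lintegral_indicator (hΩ.prod hΩ)]
  apply lintegral_mono
  rintro ⟨x, y⟩
  simp only
  by_cases hp : (x, y) ∈ Ω ×ˢ Ω
  · rw [indicator_of_mem hp]
    have : ∀ t, S.indicator (fun q => kk n s q.2) (t, (x, y)) =
        (Ico (f y) (f x)).indicator (fun _ => kk n s (x, y)) t := by
      intro t
      by_cases ht : t ∈ Ico (f y) (f x)
      · rw [indicator_of_mem ht, indicator_of_mem]
        exact ⟨ht.2, ht.1, hp.1, hp.2⟩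
      · rw [indicator_of_notMem ht, indicator_of_notMem]
        rintro ⟨h1, h2, -⟩
        exact ht ⟨h2, h1⟩
    simp_rw [this]
    rw [lintegral_indicator measurableSet_Ico, setLIntegral_const, Real.volume_Ico, mul_comm]
  · rw [indicator_of_notMem hp]
    have : ∀ t, S.indicator (fun q => kk n s q.2) (t, (x, y)) = 0 := by
      intro t
      rw [indicator_of_notMem]
      rintro ⟨-, -, h1, h2⟩
      exact hp ⟨h1, h2⟩
    simp [this]

lemma approx_set (n : ℕ) (hn : 1 ≤ n) (s : ℝ) (hs : s ∈ Ioo (0 : ℝ) 1)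
    {Ω : Set (EuclideanSpace ℝ (Fin n))} (hb : IsBounded Ω) (ho : IsOpen Ω)
    (hΩ : HasLipschitzBoundary Ω) {E : Set (EuclideanSpace ℝ (Fin n))} (hE : MeasurableSet E)
    (hfin : Ls n s (E ∩ Ω) (Eᶜ ∩ Ω) ≠ ∞) (R : ℝ) (k : ℝ) (hk : 0 < k) :
    ∃ F : Set (EuclideanSpace ℝ (Fin n)), HasSmoothBoundary F ∧
      Ls n s (F ∩ Ω) (Fᶜ ∩ Ω) ≤ Ls n s (E ∩ Ω) (Eᶜ ∩ Ω) + ENNReal.ofReal k ∧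
      volume ((F ∆ E) ∩ ball 0 R) ≤ ENNReal.ofReal k := by
  obtain ⟨A, hA0, hA⟩ : ∃ A : ℝ, 0 ≤ A ∧ Ls n s (E ∩ Ω) (Eᶜ ∩ Ω) = ENNReal.ofReal A :=
    ⟨_, ENNReal.toReal_nonneg, (ENNReal.ofReal_toReal hfin).symm⟩
  obtain ⟨δ, hδ0, hδ1, hδ2⟩ : ∃ δ : ℝ, 0 < δ ∧ δ ≤ 1 / 4 ∧ 4 * δ * (A + k) ≤ k := by
    have hAk : 0 < A + k := by linarith
    refine ⟨min (1 / 4) (k / (4 * (A + k))), by positivity, min_le_left _ _, ?_⟩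
    calc 4 * min (1 / 4) (k / (4 * (A + k))) * (A + k)
        ≤ 4 * (k / (4 * (A + k))) * (A + k) := by gcongr; exact min_le_right _ _
      _ = k := by field_simp
  set e : ℝ := k * δ with he
  have he0 : 0 < e := by positivity
  obtain ⟨u, hu, hu1, hu2⟩ := approx_fun n s hs.1 hb ho hΩ hE hfin R (ENNReal.ofReal (e / 2))
    (by simpa using he0)
  have hK := lin_kernel_fin n hn s hs hb ho
  set K := ∫⁻ p in Ω ×ˢ Ω, ENNReal.ofReal (dist p.1 p.2) * kk n s p with hKdef
  set V := ENNReal.ofReal R * volume (ball (0 : EuclideanSpace ℝ (Fin n)) R) with hV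
  have hVfin : V ≠ ∞ := ENNReal.mul_ne_top ENNReal.ofReal_ne_top measure_ball_lt_top.ne
  obtain ⟨θ, hθ, hθK⟩ : ∃ θ : ℝ, 0 < θ ∧ ENNReal.ofReal θ * (K + V) ≤ ENNReal.ofReal (e / 2) := by
    refine ⟨e / 2 / ((K + V).toReal + 1), by positivity, ?_⟩
    rw [← ENNReal.ofReal_toReal (ENNReal.add_ne_top.2 ⟨hK, hVfin⟩),
      ← ENNReal.ofReal_mul (by positivity), ENNReal.toReal_ofReal ENNReal.toReal_nonneg]
    apply ENNReal.ofReal_le_ofReal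
    have h0 : 0 ≤ (K + V).toReal := ENNReal.toReal_nonneg
    rw [div_mul_eq_mul_div, div_le_iff₀ (by positivity)]
    nlinarith
  obtain ⟨a, ha, hcrit⟩ := morse_pert hu hθ
  set f : EuclideanSpace ℝ (Fin n) → ℝ := fun x => u x - inner ℝ a x with hf
  have hfs : ContDiff ℝ (⊤ : ℕ∞) f := hu.sub (contDiff_const.inner ℝ contDiff_id)
  have hfm : Measurable f := hfs.continuous.measurable
  have hθK1 : ENNReal.ofReal θ * K ≤ ENNReal.ofReal (e / 2) :=
    le_trans (by gcongr; exact le_self_add) hθK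
  have hθV : ENNReal.ofReal θ * V ≤ ENNReal.ofReal (e / 2) :=
    le_trans (by gcongr; exact le_add_self) hθK
  have hee : ENNReal.ofReal (e / 2) + ENNReal.ofReal (e / 2) = ENNReal.ofReal e := by
    rw [← ENNReal.ofReal_add (by positivity) (by positivity), add_halves]
  have hΩm := ho.measurableSet
  have hum : Measurable u := hu.continuous.measurable
  -- energy of `f`
  have hf1 : ∫⁻ p in Ω ×ˢ Ω, ENNReal.ofReal (f p.1 - f p.2) * kk n s p ≤
      ENNReal.ofReal (A + e) := by
    calc ∫⁻ p in Ω ×ˢ Ω, ENNReal.ofReal (f p.1 - f p.2) * kk n s p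
        ≤ ∫⁻ p in Ω ×ˢ Ω, (ENNReal.ofReal (u p.1 - u p.2) * kk n s p +
            ENNReal.ofReal θ * (ENNReal.ofReal (dist p.1 p.2) * kk n s p)) := by
          apply lintegral_mono
          rintro ⟨x, y⟩
          simp only
          rw [← mul_assoc, ← add_mul, ← ENNReal.ofReal_mul hθ.le]
          gcongr
          refine le_trans (ENNReal.ofReal_le_ofReal ?_) ENNReal.ofReal_add_le
          have h1 : inner ℝ a (y - x) ≤ ‖a‖ * ‖y - x‖ := real_inner_le_norm _ _
          have h2 : ‖a‖ * ‖y - x‖ ≤ θ * dist x y := by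
            rw [dist_comm, dist_eq_norm]; gcongr
          rw [inner_sub_right] at h1
          simp only [hf]
          linarith
      _ = (∫⁻ p in Ω ×ˢ Ω, ENNReal.ofReal (u p.1 - u p.2) * kk n s p) + ENNReal.ofReal θ * K := by
          rw [lintegral_add_left, lintegral_const_mul' _ _ ENNReal.ofReal_ne_top]
          exact (((hum.comp measurable_fst).sub (hum.comp measurable_snd)).ennreal_ofReal).mul
            (measurable_kk n s)
      _ ≤ (ENNReal.ofReal A + ENNReal.ofReal (e / 2)) + ENNReal.ofReal (e / 2) := by
          rw [← hA]; gcongr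
      _ = ENNReal.ofReal (A + e) := by
          rw [add_assoc, hee, ENNReal.ofReal_add hA0 he0.le]
  -- L1 distance of `f`
  have hf2 : ∫⁻ x in ball 0 R, ENNReal.ofReal |f x - E.indicator (fun _ => (1 : ℝ)) x| ≤
      ENNReal.ofReal e := by
    calc ∫⁻ x in ball 0 R, ENNReal.ofReal |f x - E.indicator (fun _ => (1 : ℝ)) x|
        ≤ ∫⁻ x in ball 0 R, (ENNReal.ofReal |u x - E.indicator (fun _ => (1 : ℝ)) x| +
            ENNReal.ofReal θ * ENNReal.ofReal R) := by
          apply setLIntegral_mono' measurableSet_ball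
          intro x hx
          have hx' : ‖x‖ < R := by simpa using hx
          rw [← ENNReal.ofReal_mul hθ.le]
          refine le_trans (ENNReal.ofReal_le_ofReal ?_) ENNReal.ofReal_add_le
          have h1 : |inner ℝ a x| ≤ ‖a‖ * ‖x‖ := abs_real_inner_le_norm _ _
          have h2 : ‖a‖ * ‖x‖ ≤ θ * R := by gcongr
          have h3 : f x - E.indicator (fun _ => (1 : ℝ)) x =
            (u x - E.indicator (fun _ => (1 : ℝ)) x) - inner ℝ a x := by simp only [hf]; ring
          rw [h3]
          exact (abs_sub _ _).trans (by linarith)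
      _ = (∫⁻ x in ball 0 R, ENNReal.ofReal |u x - E.indicator (fun _ => (1 : ℝ)) x|) +
            ENNReal.ofReal θ * V := by
          rw [lintegral_add_right _ measurable_const, setLIntegral_const, mul_assoc]
      _ ≤ ENNReal.ofReal (e / 2) + ENNReal.ofReal (e / 2) := by gcongr
      _ = ENNReal.ofReal e := hee
  -- choice of the level
  obtain ⟨t, ht, htN, htL⟩ : ∃ t ∈ Ioo δ (1 - δ), t ∉ f '' {x | fderiv ℝ f x = 0} ∧
      Ls n s ({x | t < f x} ∩ Ω) ({x | t < f x}ᶜ ∩ Ω) ≤ ENNReal.ofReal (A + k) := by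
    by_contra! hcon
    have h1 : ∫⁻ t in Ioo δ (1 - δ), ENNReal.ofReal (A + k) ≤
        ∫⁻ t in Ioo δ (1 - δ), Ls n s ({x | t < f x} ∩ Ω) ({x | t < f x}ᶜ ∩ Ω) := by
      apply lintegral_mono_ae
      rw [ae_restrict_iff' measurableSet_Ioo]
      have : ∀ᵐ t, t ∉ f '' {x | fderiv ℝ f x = 0} := measure_eq_zero_iff_ae_notMem.1 hcrit
      filter_upwards [this] with t h1 h2
      exact (hcon t h2 h1).le
    have h2 := h1.trans ((setLIntegral_le_lintegral _ _).trans ((coarea_le n s hΩm hfm).trans hf1))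
    rw [setLIntegral_const, Real.volume_Ioo, ← ENNReal.ofReal_mul (by linarith),
      ENNReal.ofReal_le_ofReal_iff (by linarith)] at h2
    nlinarith
  refine ⟨{x | t < f x}, ⟨f, t, hfs, ?_, rfl⟩, ?_, ?_⟩
  · intro x hx hx0
    exact htN ⟨x, hx0, hx⟩
  · rw [hA, ← ENNReal.ofReal_add hA0 hk.le]
    exact htL
  · have hsub : ({x | t < f x} ∆ E) ∩ ball 0 R ⊆
        {x | ENNReal.ofReal δ ≤ ENNReal.ofReal |f x - E.indicator (fun _ => (1 : ℝ)) x|} ∩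
          ball 0 R := by
      rintro x ⟨hx, hxR⟩
      refine ⟨?_, hxR⟩
      apply ENNReal.ofReal_le_ofReal
      rcases hx with ⟨h1, h2⟩ | ⟨h1, h2⟩
      · have h1' : t < f x := h1
        rw [indicator_of_notMem h2, le_abs]
        left; linarith [ht.1]
      · have h2' : f x ≤ t := not_lt.1 h2
        rw [indicator_of_mem h1, le_abs]
        right; linarith [ht.2]
    have hch : ENNReal.ofReal δ * volume (({x | t < f x} ∆ E) ∩ ball 0 R) ≤ ENNReal.ofReal e := by
      refine le_trans ?_ hf2
      refine le_trans ?_ (mul_meas_ge_le_lintegral₀ (μ := volume.restrict (ball 0 R)) ?_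
        (ENNReal.ofReal δ))
      · refine mul_le_mul' le_rfl ?_
        rw [Measure.restrict_apply' measurableSet_ball]
        exact measure_mono hsub
      · exact ((hfm.sub (measurable_const.indicator hE)).abs.ennreal_ofReal).aemeasurable
    rw [he, mul_comm k δ, ENNReal.ofReal_mul hδ0.le] at hch
    exact (ENNReal.mul_le_mul_iff_right (by simpa using hδ0) ENNReal.ofReal_ne_top).1 hch

/-- Corollary 1.4: for a bounded open set `Ω` with Lipschitz boundary,
the `s`-perimeter in `Ω` is the relaxation, with respect to local convergence in measure,
of the `s`-perimeter of smooth open sets. -/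
theorem fractional_perimeter_as_relaxation
    (n : ℕ) (hn : 1 ≤ n) (s : ℝ) (hs : s ∈ Set.Ioo (0 : ℝ) 1)
    (Ω : Set (EuclideanSpace ℝ (Fin n))) (hΩo : IsOpen Ω) (hΩb : IsBounded Ω)
    (hΩlip : HasLipschitzBoundary Ω)
    (E : Set (EuclideanSpace ℝ (Fin n))) (hE : MeasurableSet E) :
    Ps n s E Ω = ⨅ (Eh : ℕ → Set (EuclideanSpace ℝ (Fin n)))
      (_ : ∀ h, HasSmoothBoundary (Eh h)) (_ : LocConv n Eh E),
        Filter.liminf (fun h => Ps n s (Eh h) Ω) atTop := by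
  have hΩm := hΩo.measurableSet
  apply le_antisymm
  · refine le_iInf fun Eh => le_iInf fun hsm => le_iInf fun hloc => ?_
    exact Ps_le_liminf n s hΩm hE (fun h => (hsm h).measurableSet) hloc
  by_cases hfin : Ls n s (E ∩ Ω) (Eᶜ ∩ Ω) = ∞
  · simp [Ps, hfin]
  have hex : ∀ k : ℕ, ∃ F : Set (EuclideanSpace ℝ (Fin n)), HasSmoothBoundary F ∧
      Ls n s (F ∩ Ω) (Fᶜ ∩ Ω) ≤ Ls n s (E ∩ Ω) (Eᶜ ∩ Ω) + (2⁻¹ : ℝ≥0∞) ^ k ∧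
      volume ((F ∆ E) ∩ ball 0 k) ≤ (2⁻¹ : ℝ≥0∞) ^ k := by
    intro k
    have h := approx_set n hn s hs hΩb hΩo hΩlip hE hfin k ((2⁻¹ : ℝ) ^ k) (by positivity)
    have h2 : ENNReal.ofReal ((2⁻¹ : ℝ) ^ k) = (2⁻¹ : ℝ≥0∞) ^ k := by
      rw [ENNReal.ofReal_pow (by norm_num), ENNReal.ofReal_inv_of_pos (by norm_num)]
      simp
    rwa [h2] at h
  choose F hFs hFL hFv using hex
  have hpow : Tendsto (fun k : ℕ => (2⁻¹ : ℝ≥0∞) ^ k) atTop (𝓝 0) :=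
    ENNReal.tendsto_pow_atTop_nhds_zero_of_lt_one (by simp)
  have hloc : LocConv n F E := by
    intro K hK
    obtain ⟨r, hr⟩ := hK.subset_ball 0
    refine tendsto_of_tendsto_of_tendsto_of_le_of_le' tendsto_const_nhds hpow
      (Eventually.of_forall fun _ => zero_le) ?_
    filter_upwards [eventually_ge_atTop ⌈r⌉₊] with k hk
    refine (measure_mono ?_).trans (hFv k)
    refine inter_subset_inter_right _ (hr.trans (ball_subset_ball ?_))
    exact (Nat.le_ceil r).trans (by exact_mod_cast hk)
  refine iInf_le_of_le F (iInf_le_of_le hFs (iInf_le_of_le hloc ?_))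
  have hae := ae_of_fast hFv
  have hFm : ∀ k, MeasurableSet (F k) := fun k => (hFs k).measurableSet
  have hcf := Ls_compl_fin n hn s hs hΩb hΩo hΩlip
  have hcf' : Ls n s Ωᶜ Ω ≠ ∞ := by rw [Ls_symm]; exact hcf
  have ht1 : Tendsto (fun k => Ls n s (F k ∩ Ω) ((F k)ᶜ \ Ω)) atTop
      (𝓝 (Ls n s (E ∩ Ω) (Eᶜ \ Ω))) := by
    refine Ls_tendsto n s hΩm hΩm.compl (hE.inter hΩm) (hE.compl.diff hΩm)
      (fun k => (hFm k).inter hΩm) (fun k => (hFm k).compl.diff hΩm)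
      (fun k => inter_subset_right) (fun k x hx => hx.2) hcf ?_ ?_
    · filter_upwards [hae] with x hx
      filter_upwards [hx] with k hk
      simp [hk]
    · filter_upwards [hae] with x hx
      filter_upwards [hx] with k hk
      simp [hk]
  have ht2 : Tendsto (fun k => Ls n s (F k \ Ω) ((F k)ᶜ ∩ Ω)) atTop
      (𝓝 (Ls n s (E \ Ω) (Eᶜ ∩ Ω))) := by
    refine Ls_tendsto n s hΩm.compl hΩm (hE.diff hΩm) (hE.compl.inter hΩm)
      (fun k => (hFm k).diff hΩm) (fun k => (hFm k).compl.inter hΩm)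
      (fun k x hx => hx.2) (fun k => inter_subset_right) hcf' ?_ ?_
    · filter_upwards [hae] with x hx
      filter_upwards [hx] with k hk
      simp [hk]
    · filter_upwards [hae] with x hx
      filter_upwards [hx] with k hk
      simp [hk]
  have ht0 : Tendsto (fun k : ℕ => Ls n s (E ∩ Ω) (Eᶜ ∩ Ω) + (2⁻¹ : ℝ≥0∞) ^ k) atTop
      (𝓝 (Ls n s (E ∩ Ω) (Eᶜ ∩ Ω))) := by
    simpa using tendsto_const_nhds.add hpow
  have htt := (ht0.add ht1).add ht2
  have hlim := htt.liminf_eq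
  rw [show Ps n s E Ω = Ls n s (E ∩ Ω) (Eᶜ ∩ Ω) + Ls n s (E ∩ Ω) (Eᶜ \ Ω) +
    Ls n s (E \ Ω) (Eᶜ ∩ Ω) from rfl, ← hlim]
  refine liminf_le_liminf (Eventually.of_forall fun k => ?_)
  simp only [Ps]
  gcongr
  exact hFL k
end

section
/- Let Ω ⊆ ℝ^n be an open set, s ∈ (0,1), and let E₀ ⊆ ℝ^n be measurable. There exists a measurable set E ⊆ ℝ^n that is s-minimal in Ω with |(E∖Ω) Δ (E₀∖Ω)| = 0 if and only if there exists a measurable set F ⊆ ℝ^n with |(F∖Ω) Δ (E₀∖Ω)| = 0 and P_s(F,Ω) < ∞. -/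
open MeasureTheory Set Filter Topology Metric Bornology
open scoped ENNReal NNReal symmDiff

def SMinimal (n : ℕ) (s : ℝ) (E Ω : Set (EuclideanSpace ℝ (Fin n))) : Prop :=
  Ps n s E Ω < ⊤ ∧ ∀ F : Set (EuclideanSpace ℝ (Fin n)), MeasurableSet F →
    volume ((F \ Ω) ∆ (E \ Ω)) = 0 → Ps n s E Ω ≤ Ps n s F Ω

/-- The energy of a set seen as a measure of a subset of the product. -/
lemma energy_submod {X : Type*} [MeasurableSpace X] (ν : Measure (X × X)) (W : Set (X × X))
    (hW : MeasurableSet W) (E F : Set X) (hE : MeasurableSet E) (hF : MeasurableSet F) :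
    ν (((E ∪ F) ×ˢ (E ∪ F)ᶜ) ∩ W) + ν (((E ∩ F) ×ˢ (E ∩ F)ᶜ) ∩ W)
      ≤ ν ((E ×ˢ Eᶜ) ∩ W) + ν ((F ×ˢ Fᶜ) ∩ W) := by
  have hI : MeasurableSet (((E ∩ F) ×ˢ (E ∩ F)ᶜ) ∩ W) :=
    ((hE.inter hF).prod (hE.inter hF).compl).inter hW
  have hF' : MeasurableSet ((F ×ˢ Fᶜ) ∩ W) := (hF.prod hF.compl).inter hW
  rw [← measure_union_add_inter _ hI, ← measure_union_add_inter _ hF']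
  refine add_le_add (measure_mono ?_) (measure_mono ?_)
  · rintro ⟨x, y⟩
    simp only [mem_union, mem_inter_iff, mem_prod, mem_compl_iff]
    tauto
  · rintro ⟨x, y⟩
    simp only [mem_union, mem_inter_iff, mem_prod, mem_compl_iff]
    tauto

/-- Abstract existence of minimizers, by submodularity. -/
lemma exists_min_energy {X : Type*} [MeasurableSpace X] (ν : Measure (X × X)) (W : Set (X × X))
    (hW : MeasurableSet W) (C : Set (Set X)) (hCm : ∀ E ∈ C, MeasurableSet E)
    (hCU : ∀ f : ℕ → Set X, (∀ k, f k ∈ C) → (⋃ k, f k) ∈ C)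
    (hCI : ∀ f : ℕ → Set X, (∀ k, f k ∈ C) → (⋂ k, f k) ∈ C)
    (hfin : ∃ F ∈ C, ν ((F ×ˢ Fᶜ) ∩ W) < ⊤) :
    ∃ E ∈ C, ∀ F ∈ C, ν ((E ×ˢ Eᶜ) ∩ W) ≤ ν ((F ×ˢ Fᶜ) ∩ W) := by
  set Q : Set X → ℝ≥0∞ := fun E => ν ((E ×ˢ Eᶜ) ∩ W) with hQ
  set m : ℝ≥0∞ := ⨅ E ∈ C, Q E with hm
  have hmle : ∀ E ∈ C, m ≤ Q E := fun E hE => iInf₂_le E hE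
  have hmtop : m ≠ ⊤ := by
    obtain ⟨F, hF, hlt⟩ := hfin
    exact ((hmle F hF).trans_lt hlt).ne
  have hU2 : ∀ E ∈ C, ∀ F ∈ C, E ∪ F ∈ C := by
    intro E hE F hF
    have := hCU (fun k => if k = 0 then E else F) (by intro k; split_ifs <;> assumption)
    convert this using 1
    ext x
    simp only [mem_union, mem_iUnion]
    constructor
    · rintro (h | h)
      · exact ⟨0, by simpa using h⟩
      · exact ⟨1, by simpa using h⟩
    · rintro ⟨k, hk⟩
      split_ifs at hk <;> tauto
  have hI2 : ∀ E ∈ C, ∀ F ∈ C, E ∩ F ∈ C := by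
    intro E hE F hF
    have := hCI (fun k => if k = 0 then E else F) (by intro k; split_ifs <;> assumption)
    convert this using 1
    ext x
    simp only [mem_inter_iff, mem_iInter]
    constructor
    · rintro ⟨h1, h2⟩ k
      split_ifs <;> assumption
    · intro h
      exact ⟨by simpa using h 0, by simpa using h 1⟩
  have hstep : ∀ E ∈ C, ∀ F ∈ C, ∀ a b : ℝ≥0∞, Q E ≤ m + a → Q F ≤ m + b →
      Q (E ∪ F) ≤ m + (a + b) := by
    intro E hE F hF a b ha hb
    have h1 : Q (E ∪ F) + Q (E ∩ F) ≤ Q E + Q F :=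
      energy_submod ν W hW E F (hCm E hE) (hCm F hF)
    have h2 := hmle _ (hI2 E hE F hF)
    have h3 : Q (E ∪ F) + m ≤ (m + (a + b)) + m := by
      calc Q (E ∪ F) + m ≤ Q (E ∪ F) + Q (E ∩ F) := by gcongr
        _ ≤ Q E + Q F := h1
        _ ≤ (m + a) + (m + b) := add_le_add ha hb
        _ = (m + (a + b)) + m := by ring
    exact (ENNReal.add_le_add_iff_right hmtop).1 h3
  let ε : ℕ → ℝ≥0∞ := fun k => (2⁻¹ : ℝ≥0∞) ^ k
  have hεpos : ∀ k, ε k ≠ 0 := fun k => by simp [ε]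
  have hεsum : ∑' k, ε k ≠ ⊤ := by
    simp [ε, ENNReal.tsum_geometric]
  have hex : ∀ k, ∃ E ∈ C, Q E ≤ m + ε k := by
    intro k
    have hlt : m < m + ε k := ENNReal.lt_add_right hmtop (hεpos k)
    rw [hm] at hlt
    obtain ⟨E, hE⟩ := iInf_lt_iff.1 hlt
    obtain ⟨hEC, hE⟩ := iInf_lt_iff.1 hE
    exact ⟨E, hEC, hE.le⟩
  choose f hfC hfQ using hex
  let T : ℕ → ℝ≥0∞ := fun N => ∑' i, ε (i + N)
  have hT : Tendsto T atTop (𝓝 0) := ENNReal.tendsto_sum_nat_add ε hεsum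
  let A : ℕ → ℕ → Set X := fun N j => Nat.rec (f N) (fun i S => S ∪ f (i + 1 + N)) j
  have hA0 : ∀ N, A N 0 = f N := fun N => rfl
  have hAs : ∀ N j, A N (j + 1) = A N j ∪ f (j + 1 + N) := fun N j => rfl
  have hAC : ∀ N j, A N j ∈ C := by
    intro N j
    induction j with
    | zero => exact hfC N
    | succ j ih => rw [hAs]; exact hU2 _ ih _ (hfC _)
  have hAQ : ∀ N j, Q (A N j) ≤ m + ∑ i ∈ Finset.range (j + 1), ε (i + N) := by
    intro N j
    induction j with
    | zero => simpa [hA0] using hfQ N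
    | succ j ih =>
      rw [hAs, Finset.sum_range_succ]
      exact hstep _ (hAC N j) _ (hfC _) _ _ ih (hfQ _)
  have hAT : ∀ N j, Q (A N j) ≤ m + T N := fun N j =>
    (hAQ N j).trans (by gcongr; exact ENNReal.sum_le_tsum _)
  have hAmono : ∀ N, Monotone (A N) := fun N =>
    monotone_nat_of_le_succ fun j => by rw [hAs]; exact subset_union_left
  let G : ℕ → Set X := fun N => ⋃ j, A N j
  have hGC : ∀ N, G N ∈ C := fun N => hCU _ (hAC N)
  have hGQ : ∀ N, Q (G N) ≤ m + T N := by
    intro N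
    have hsub : (G N ×ˢ (G N)ᶜ) ∩ W ⊆ ⋃ j, (A N j ×ˢ (G N)ᶜ) ∩ W := by
      rintro ⟨x, y⟩ ⟨⟨hx, hy⟩, hw⟩
      obtain ⟨j, hj⟩ := mem_iUnion.1 hx
      exact mem_iUnion.2 ⟨j, ⟨hj, hy⟩, hw⟩
    have hmon : Monotone fun j => (A N j ×ˢ (G N)ᶜ) ∩ W := fun i j hij =>
      inter_subset_inter_left _ (prod_mono (hAmono N hij) subset_rfl)
    refine (measure_mono hsub).trans ?_
    rw [hmon.measure_iUnion]
    refine iSup_le fun j => le_trans (measure_mono ?_) (hAT N j)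
    exact inter_subset_inter_left _
      (prod_mono subset_rfl (compl_subset_compl.2 (subset_iUnion (A N) j)))
  have hfA : ∀ N j, f (j + N) ⊆ A N j := by
    intro N j
    cases j with
    | zero => rw [hA0, Nat.zero_add]
    | succ j => rw [hAs]; exact subset_union_right
  have hGanti : Antitone G := by
    refine antitone_nat_of_succ_le fun N => ?_
    refine iUnion_subset fun j => ?_
    have : ∀ j, A (N + 1) j ⊆ A N (j + 1) := by
      intro j
      induction j with
      | zero => 
        have := hfA N 1
        rw [add_comm] at this
        exact this
      | succ j ih =>
        rw [hAs (N + 1), hAs N (j + 1)]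
        refine union_subset_union ih ?_
        rw [show j + 1 + (N + 1) = j + 1 + 1 + N by ring]
    exact (this j).trans (subset_iUnion (A N) (j + 1))
  let H : Set X := ⋂ N, G N
  have hHC : H ∈ C := hCI _ hGC
  have hHQ : Q H ≤ m := by
    have hsub : (H ×ˢ Hᶜ) ∩ W ⊆ ⋃ N, (H ×ˢ (G N)ᶜ) ∩ W := by
      rintro ⟨x, y⟩ ⟨⟨hx, hy⟩, hw⟩
      obtain ⟨N, hN⟩ : ∃ N, y ∉ G N := by
        by_contra! hcon
        exact hy (mem_iInter.2 hcon)
      exact mem_iUnion.2 ⟨N, ⟨hx, hN⟩, hw⟩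
    have hmon : Monotone fun N => (H ×ˢ (G N)ᶜ) ∩ W := fun i j hij =>
      inter_subset_inter_left _ (prod_mono subset_rfl (compl_subset_compl.2 (hGanti hij)))
    refine (measure_mono hsub).trans ?_
    rw [hmon.measure_iUnion]
    refine iSup_le fun N => ?_
    have hlim : Tendsto (fun M => m + T M) atTop (𝓝 m) := by
      simpa using hT.const_add m
    refine ge_of_tendsto hlim ?_
    filter_upwards [eventually_ge_atTop N] with M hM
    refine le_trans ?_ (hGQ M)
    refine (measure_mono (hmon hM)).trans (measure_mono ?_)
    exact inter_subset_inter_left _ (prod_mono (iInter_subset G M) subset_rfl)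
  exact ⟨H, hHC, fun F hF => hHQ.trans (hmle F hF)⟩

lemma Ls_eq_s4 (n : ℕ) (s : ℝ) (A B : Set (EuclideanSpace ℝ (Fin n)))
    (hA : MeasurableSet A) (hB : MeasurableSet B) :
    Ls n s A B = ((volume.prod volume).withDensity
      (fun p : EuclideanSpace ℝ (Fin n) × EuclideanSpace ℝ (Fin n) =>
        ENNReal.ofReal (dist p.1 p.2 ^ (-((n : ℝ) + s))))) (A ×ˢ B) := by
  have hk : Measurable (fun p : EuclideanSpace ℝ (Fin n) × EuclideanSpace ℝ (Fin n) =>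
        ENNReal.ofReal (dist p.1 p.2 ^ (-((n : ℝ) + s)))) := by fun_prop
  rw [withDensity_apply _ (hA.prod hB), ← Measure.prod_restrict, lintegral_prod _ hk.aemeasurable]
  rfl

lemma Ps_eq (n : ℕ) (s : ℝ) (E Ω : Set (EuclideanSpace ℝ (Fin n)))
    (hE : MeasurableSet E) (hΩ : MeasurableSet Ω) :
    Ps n s E Ω = ((volume.prod volume).withDensity
      (fun p : EuclideanSpace ℝ (Fin n) × EuclideanSpace ℝ (Fin n) =>
        ENNReal.ofReal (dist p.1 p.2 ^ (-((n : ℝ) + s))))) ((E ×ˢ Eᶜ) ∩ (Ωᶜ ×ˢ Ωᶜ)ᶜ) := by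
  have m1 := hE.inter hΩ
  have m2 := hE.compl.inter hΩ
  have m3 := hE.compl.diff hΩ
  have m4 := hE.diff hΩ
  rw [Ps, Ls_eq_s4 n s _ _ m1 m2, Ls_eq_s4 n s _ _ m1 m3, Ls_eq_s4 n s _ _ m4 m2,
    ← measure_union _ (m1.prod m3), ← measure_union _ (m4.prod m2)]
  · congr 1
    ext ⟨x, y⟩
    simp only [mem_union, mem_inter_iff, mem_prod, mem_compl_iff, Set.mem_sdiff]
    tauto
  · rw [Set.disjoint_left]
    rintro ⟨x, y⟩
    simp only [mem_union, mem_inter_iff, mem_prod, mem_compl_iff, Set.mem_sdiff]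
    tauto
  · rw [Set.disjoint_left]
    rintro ⟨x, y⟩
    simp only [mem_inter_iff, mem_prod, mem_compl_iff, Set.mem_sdiff]
    tauto

/-- Theorem 1.8: an `s`-minimal set in `Ω` with exterior data `E₀ ∖ Ω` exists
if and only if there is a competitor with finite `s`-perimeter in `Ω`. -/
theorem exists_sMinimal_iff_exists_finite_competitor
    (n : ℕ) (hn : 1 ≤ n) (s : ℝ) (hs : s ∈ Set.Ioo (0 : ℝ) 1)
    (Ω : Set (EuclideanSpace ℝ (Fin n))) (hΩ : IsOpen Ω)
    (E₀ : Set (EuclideanSpace ℝ (Fin n))) (hE₀ : MeasurableSet E₀) :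
    (∃ E : Set (EuclideanSpace ℝ (Fin n)), MeasurableSet E ∧
        SMinimal n s E Ω ∧ volume ((E \ Ω) ∆ (E₀ \ Ω)) = 0)
      ↔ (∃ F : Set (EuclideanSpace ℝ (Fin n)), MeasurableSet F ∧
          volume ((F \ Ω) ∆ (E₀ \ Ω)) = 0 ∧ Ps n s F Ω < ⊤) := by
  have hΩm := hΩ.measurableSet
  constructor
  · rintro ⟨E, hE, hmin, h0⟩
    exact ⟨E, hE, h0, hmin.1⟩
  · rintro ⟨F, hF, h0, hfin⟩
    have hW : MeasurableSet ((Ωᶜ ×ˢ Ωᶜ)ᶜ : Set (EuclideanSpace ℝ (Fin n) × EuclideanSpace ℝ (Fin n))) :=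
      (hΩm.compl.prod hΩm.compl).compl
    obtain ⟨E, ⟨hE, hE0⟩, hmin⟩ := exists_min_energy ((volume.prod volume).withDensity
      (fun p : EuclideanSpace ℝ (Fin n) × EuclideanSpace ℝ (Fin n) =>
        ENNReal.ofReal (dist p.1 p.2 ^ (-((n : ℝ) + s))))) _ hW
      {E | MeasurableSet E ∧ volume ((E \ Ω) ∆ (E₀ \ Ω)) = 0} (fun E hE => hE.1)
      (fun f hf => ⟨MeasurableSet.iUnion fun k => (hf k).1, by
        refine measure_mono_null ?_ (measure_iUnion_null fun k => (hf k).2)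
        intro x
        simp only [mem_symmDiff, Set.mem_sdiff, mem_iUnion]
        rintro (⟨⟨⟨k, hk⟩, hx⟩, h2⟩ | ⟨h1, h2⟩)
        · exact ⟨k, Or.inl ⟨⟨hk, hx⟩, h2⟩⟩
        · exact ⟨0, Or.inr ⟨h1, fun h => h2 ⟨⟨0, h.1⟩, h.2⟩⟩⟩⟩)
      (fun f hf => ⟨MeasurableSet.iInter fun k => (hf k).1, by
        refine measure_mono_null ?_ (measure_iUnion_null fun k => (hf k).2)
        intro x
        simp only [mem_symmDiff, Set.mem_sdiff, mem_iUnion, mem_iInter]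
        rintro (⟨⟨hk, hx⟩, h2⟩ | ⟨h1, h2⟩)
        · exact ⟨0, Or.inl ⟨⟨hk 0, hx⟩, h2⟩⟩
        · by_contra! hcon
          refine h2 ⟨fun k => ?_, h1.2⟩
          by_contra hk
          exact (hcon k).2 h1 |>.1 |> hk⟩)
      ⟨F, ⟨hF, h0⟩, by rw [← Ps_eq n s F Ω hF hΩm]; exact hfin⟩
    have key : ∀ F : Set (EuclideanSpace ℝ (Fin n)), MeasurableSet F →
        volume ((F \ Ω) ∆ (E₀ \ Ω)) = 0 → Ps n s E Ω ≤ Ps n s F Ω := by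
      intro F hF hF0
      rw [Ps_eq n s E Ω hE hΩm, Ps_eq n s F Ω hF hΩm]
      exact hmin F ⟨hF, hF0⟩
    refine ⟨E, hE, ⟨(key F hF h0).trans_lt hfin, fun F' hF' h' => key F' hF' ?_⟩, hE0⟩
    rw [measure_symmDiff_eq_zero_iff] at h' hE0 ⊢
    exact h'.trans hE0
end

section
/- Let Ω ⊆ ℝ^n be any open set, s ∈ (0,1), and let E₀ ⊆ ℝ^n be any measurable set. Then there exists a measurable set E ⊆ ℝ^n that is locally s-minimal in Ω (i.e. s-minimal in every open Ω' ⊂⊂ Ω) and satisfies |(E∖Ω) Δ (E₀∖Ω)| = 0. -/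
open MeasureTheory Set Filter Topology Metric Bornology
open scoped ENNReal NNReal symmDiff

def LocSMinimal (n : ℕ) (s : ℝ) (E Ω : Set (EuclideanSpace ℝ (Fin n))) : Prop :=
  ∀ Ω' : Set (EuclideanSpace ℝ (Fin n)), IsOpen Ω' → IsCompact (closure Ω') →
    closure Ω' ⊆ Ω → SMinimal n s E Ω'


namespace SMin

set_option linter.unusedSectionVars false

variable {X : Type*} [MeasurableSpace X]

/-- The set of pairs that enter the perimeter. -/
def D (E Ω : Set X) : Set (X × X) := (E ×ˢ Eᶜ) \ (Ωᶜ ×ˢ Ωᶜ)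

/-- Abstract perimeter. -/
noncomputable def Q (ν : Measure (X × X)) (E Ω : Set X) : ℝ≥0∞ := ν (D E Ω)

/-- Abstract minimality. -/
def Mn (ν : Measure (X × X)) (E Ω : Set X) : Prop :=
  Q ν E Ω < ⊤ ∧ ∀ F, MeasurableSet F → F \ Ω = E \ Ω → Q ν E Ω ≤ Q ν F Ω

lemma measD {E Ω : Set X} (hE : MeasurableSet E) (hΩ : MeasurableSet Ω) :
    MeasurableSet (D E Ω) :=
  (hE.prod hE.compl).diff (hΩ.compl.prod hΩ.compl)

lemma submod (ν : Measure (X × X)) {E F Ω : Set X} (hE : MeasurableSet E) (hF : MeasurableSet F)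
    (hΩ : MeasurableSet Ω) :
    Q ν (E ∪ F) Ω + Q ν (E ∩ F) Ω ≤ Q ν E Ω + Q ν F Ω := by
  unfold Q
  rw [← measure_union_add_inter (D (E ∪ F) Ω) (measD (hE.inter hF) hΩ),
    ← measure_union_add_inter (D E Ω) (measD hF hΩ)]
  refine add_le_add (measure_mono ?_) (measure_mono ?_)
  · rintro ⟨x, y⟩ h
    simp only [D, mem_union, mem_inter_iff, Set.mem_sdiff, mem_prod, mem_compl_iff] at h ⊢
    tauto
  · rintro ⟨x, y⟩ h
    simp only [D, mem_union, mem_inter_iff, Set.mem_sdiff, mem_prod, mem_compl_iff] at h ⊢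
    tauto

/-- The remainder depends only on values outside the smaller domain. -/
lemma loc (ν : Measure (X × X)) {E Ω' Ω : Set X} (hΩ' : MeasurableSet Ω') (h : Ω' ⊆ Ω) :
    Q ν E Ω = Q ν E Ω' + ν (((E \ Ω') ×ˢ ((E \ Ω') ∪ Ω')ᶜ) \ (Ωᶜ ×ˢ Ωᶜ)) := by
  unfold Q
  rw [← measure_sdiff_add_inter (D E Ω) ((hΩ'.compl).prod (hΩ'.compl))]
  congr 2
  · ext ⟨x, y⟩
    have := @h x
    have := @h y
    simp only [D, Set.mem_sdiff, mem_prod, mem_compl_iff]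
    tauto
  · ext ⟨x, y⟩
    simp only [D, mem_inter_iff, mem_union, Set.mem_sdiff, mem_prod, mem_compl_iff]
    tauto

lemma diff_mono_eq {E F Ω' Ω : Set X} (h : Ω' ⊆ Ω) (hEF : F \ Ω' = E \ Ω') : F \ Ω = E \ Ω := by
  ext x
  have h1 := Set.ext_iff.1 hEF x
  have := @h x
  simp only [Set.mem_sdiff] at h1 ⊢
  tauto

lemma Mn.mono {ν : Measure (X × X)} {E Ω' Ω : Set X} (hΩ' : MeasurableSet Ω') (h : Ω' ⊆ Ω)
    (hE : Mn ν E Ω) : Mn ν E Ω' := by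
  have h1 := loc ν (E := E) hΩ' h
  have hfin := hE.1
  rw [h1] at hfin
  have h2 := ENNReal.add_lt_top.1 hfin
  refine ⟨h2.1, fun F hF hFE => ?_⟩
  have h3 := hE.2 F hF (diff_mono_eq h hFE)
  rw [loc ν (E := F) hΩ' h, hFE, h1] at h3
  exact (ENNReal.add_le_add_iff_right h2.2.ne).1 h3

/-- Semicontinuity along increasing sequences. -/
lemma lsc_incr (ν : Measure (X × X)) {U : ℕ → Set X} {Ω : Set X} (hU : Monotone U)
    {c : ℝ≥0∞} {b : ℕ → ℝ≥0∞} (hb : Tendsto b atTop (𝓝 c))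
    (h : ∀ᶠ k in atTop, Q ν (U k) Ω ≤ b k) : Q ν (⋃ k, U k) Ω ≤ c := by
  have e : D (⋃ k, U k) Ω = ⋃ k, ((U k) ×ˢ (⋃ k, U k)ᶜ) \ (Ωᶜ ×ˢ Ωᶜ) := by
    ext ⟨x, y⟩
    simp [D]
  have hm : Monotone fun k => ((U k) ×ˢ (⋃ k, U k)ᶜ) \ (Ωᶜ ×ˢ Ωᶜ) := fun i j hij =>
    sdiff_subset_sdiff_left (prod_mono (hU hij) le_rfl)
  rw [Q, e, hm.measure_iUnion]
  refine iSup_le fun k => ge_of_tendsto hb ?_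
  filter_upwards [h, eventually_ge_atTop k] with j hj hkj
  refine le_trans (le_trans (measure_mono (hm hkj)) (measure_mono ?_)) hj
  exact sdiff_subset_sdiff_left (prod_mono le_rfl (compl_subset_compl.2 (subset_iUnion U j)))

lemma lsc_decr (ν : Measure (X × X)) {U : ℕ → Set X} {Ω : Set X} (hU : Antitone U)
    {c : ℝ≥0∞} {b : ℕ → ℝ≥0∞} (hb : Tendsto b atTop (𝓝 c))
    (h : ∀ᶠ k in atTop, Q ν (U k) Ω ≤ b k) : Q ν (⋂ k, U k) Ω ≤ c := by
  have e : D (⋂ k, U k) Ω = ⋃ k, ((⋂ k, U k) ×ˢ (U k)ᶜ) \ (Ωᶜ ×ˢ Ωᶜ) := by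
    ext ⟨x, y⟩
    simp [D]
  have hm : Monotone fun k => ((⋂ k, U k) ×ˢ (U k)ᶜ) \ (Ωᶜ ×ˢ Ωᶜ) := fun i j hij =>
    sdiff_subset_sdiff_left (prod_mono le_rfl (compl_subset_compl.2 (hU hij)))
  rw [Q, e, hm.measure_iUnion]
  refine iSup_le fun k => ge_of_tendsto hb ?_
  filter_upwards [h, eventually_ge_atTop k] with j hj hkj
  refine le_trans (le_trans (measure_mono (hm hkj)) (measure_mono ?_)) hj
  exact sdiff_subset_sdiff_left (prod_mono (iInter_subset U j) le_rfl)

lemma Q_diff_le (ν : Measure (X × X)) (A Ω : Set X) : Q ν (A \ Ω) Ω ≤ ν (Ωᶜ ×ˢ Ω) := by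
  refine measure_mono ?_
  rintro ⟨x, y⟩ h
  simp only [D, Set.mem_sdiff, mem_prod, mem_compl_iff] at h ⊢
  tauto

/-- Existence of minimizers. -/
lemma exists_min (ν : Measure (X × X)) {A Ω : Set X} (hA : MeasurableSet A)
    (hΩ : MeasurableSet Ω) (hf : ν (Ωᶜ ×ˢ Ω) < ⊤) :
    ∃ E, MeasurableSet E ∧ E \ Ω = A \ Ω ∧ Mn ν E Ω := by
  set C : Set (Set X) := {E | MeasurableSet E ∧ E \ Ω = A \ Ω} with hC
  set m : ℝ≥0∞ := ⨅ E ∈ C, Q ν E Ω with hm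
  have hmle : ∀ E ∈ C, m ≤ Q ν E Ω := fun E hE => iInf₂_le E hE
  have hmfin : m < ⊤ := by
    refine lt_of_le_of_lt (hmle (A \ Ω) ⟨hA.diff hΩ, ?_⟩) ((Q_diff_le ν A Ω).trans_lt hf)
    simp
  have hCu : ∀ E ∈ C, ∀ F ∈ C, E ∪ F ∈ C := by
    rintro E ⟨hE, hE'⟩ F ⟨hF, hF'⟩
    exact ⟨hE.union hF, by rw [union_sdiff_distrib, hE', hF', union_self]⟩
  have hCi : ∀ E ∈ C, ∀ F ∈ C, E ∩ F ∈ C := by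
    rintro E ⟨hE, hE'⟩ F ⟨hF, hF'⟩
    refine ⟨hE.inter hF, ?_⟩
    ext x
    have h1 := Set.ext_iff.1 hE' x
    have h2 := Set.ext_iff.1 hF' x
    simp only [Set.mem_sdiff, mem_inter_iff] at h1 h2 ⊢
    tauto
  have hCU : ∀ f : ℕ → Set X, (∀ k, f k ∈ C) → (⋃ k, f k) ∈ C := by
    intro f h
    refine ⟨MeasurableSet.iUnion fun k => (h k).1, ?_⟩
    rw [iUnion_sdiff]
    simp [fun k => (h k).2, iUnion_const]
  have hCI : ∀ f : ℕ → Set X, (∀ k, f k ∈ C) → (⋂ k, f k) ∈ C := by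
    intro f h
    refine ⟨MeasurableSet.iInter fun k => (h k).1, ?_⟩
    rw [Set.sdiff_eq, iInter_inter]
    have : ∀ k, f k ∩ Ωᶜ = A \ Ω := fun k => (h k).2
    simp [this, iInter_const]
  have hch : ∀ k : ℕ, ∃ E ∈ C, Q ν E Ω ≤ m + (2⁻¹ : ℝ≥0∞) ^ k := by
    intro k
    have : m < m + (2⁻¹ : ℝ≥0∞) ^ k :=
      ENNReal.lt_add_right hmfin.ne (by simp)
    rw [hm, iInf_lt_iff] at this
    obtain ⟨E, hE⟩ := this
    rw [iInf_lt_iff] at hE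
    obtain ⟨h1, h2⟩ := hE
    exact ⟨E, h1, h2.le⟩
  choose G hGC hGQ using hch
  let U : ℕ → ℕ → Set X := fun N j => Nat.rec (G N) (fun i S => S ∪ G (N + i + 1)) j
  have hU0 : ∀ N, U N 0 = G N := fun N => rfl
  have hUs : ∀ N j, U N (j+1) = U N j ∪ G (N + j + 1) := fun N j => rfl
  have hUC : ∀ N j, U N j ∈ C := by
    intro N j
    induction j with
    | zero => exact hGC N
    | succ j ih => rw [hUs]; exact hCu _ ih _ (hGC _)
  have hUQ : ∀ N j, Q ν (U N j) Ω ≤ m + ∑ i ∈ Finset.range (j+1), (2⁻¹ : ℝ≥0∞) ^ (N + i) := by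
    intro N j
    induction j with
    | zero => simpa [hU0] using hGQ N
    | succ j ih =>
      rw [hUs, Finset.sum_range_succ]
      have h1 := submod ν (hUC N j).1 (hGC (N+j+1)).1 hΩ
      have h2 := hmle _ (hCi _ (hUC N j) _ (hGC (N+j+1)))
      have h3 := hGQ (N+j+1)
      rw [← ENNReal.add_le_add_iff_right hmfin.ne]
      calc _ ≤ _ := add_le_add le_rfl h2
        _ ≤ _ := h1
        _ ≤ _ := add_le_add ih h3
        _ = _ := by rw [show N + j + 1 = N + (j+1) by ring]; ring
  have hsum : ∀ N j, ∑ i ∈ Finset.range (j+1), (2⁻¹ : ℝ≥0∞) ^ (N + i) ≤ 2⁻¹ ^ N * 2 := by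
    intro N j
    simp_rw [pow_add]
    rw [← Finset.mul_sum]
    gcongr
    refine (ENNReal.sum_le_tsum _).trans ?_
    rw [ENNReal.tsum_geometric]
    simp
  let V : ℕ → Set X := fun N => ⋃ k, G (N + k)
  have hVU : ∀ N, V N = ⋃ j, U N j := by
    intro N
    apply subset_antisymm
    · refine iUnion_subset fun k => ?_
      refine subset_trans ?_ (subset_iUnion _ k)
      cases k with
      | zero => exact le_rfl
      | succ k => rw [hUs]; exact subset_union_right
    · refine iUnion_subset fun j => ?_
      induction j with
      | zero => exact subset_iUnion (fun k => G (N + k)) 0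
      | succ j ih => rw [hUs]; exact union_subset ih (subset_iUnion (fun k => G (N + k)) (j+1))
  have hVQ : ∀ N, Q ν (V N) Ω ≤ m + 2⁻¹ ^ N * 2 := by
    intro N
    rw [hVU]
    refine lsc_incr ν (monotone_nat_of_le_succ fun j => ?_) (tendsto_const_nhds) 
      (Eventually.of_forall fun j => (hUQ N j).trans (by gcongr; exact hsum N j))
    rw [hUs]; exact subset_union_left
  have hVa : Antitone V := by
    refine antitone_nat_of_succ_le fun N => iUnion_subset fun k => ?_
    rw [show N + 1 + k = N + (k+1) by ring]
    exact subset_iUnion (fun k => G (N + k)) (k+1)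
  have hlim : Tendsto (fun N : ℕ => m + (2⁻¹ : ℝ≥0∞) ^ N * 2) atTop (𝓝 m) := by
    have h1 : Tendsto (fun N : ℕ => (2⁻¹ : ℝ≥0∞) ^ N) atTop (𝓝 0) :=
      ENNReal.tendsto_pow_atTop_nhds_zero_of_lt_one (by simp)
    have h2 := ENNReal.Tendsto.mul_const h1 (b := 2) (Or.inr (by simp))
    simpa using h2.const_add m
  have hfinal := lsc_decr ν hVa hlim (Eventually.of_forall hVQ)
  have hEC := hCI V (fun N => hCU _ fun k => hGC _)
  exact ⟨⋂ N, V N, hEC.1, hEC.2, hfinal.trans_lt hmfin, fun F hF hFE =>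
    hfinal.trans (hmle F ⟨hF, hFE.trans hEC.2⟩)⟩

lemma step (ν : Measure (X × X)) {A Ω₁ Ω₂ E : Set X} (hA : MeasurableSet A)
    (h1 : MeasurableSet Ω₁) (h2 : MeasurableSet Ω₂) (h12 : Ω₁ ⊆ Ω₂) (hAd : Disjoint A Ω₂)
    (hf : ν (Ω₂ᶜ ×ˢ Ω₂) < ⊤) (hE : MeasurableSet E) (hEA : E \ Ω₁ = A) (hM : Mn ν E Ω₁) :
    ∃ F, MeasurableSet F ∧ F \ Ω₂ = A ∧ Mn ν F Ω₂ ∧ E ⊆ F := by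
  obtain ⟨G, hG, hGA, hGM⟩ := exists_min ν hA h2 hf
  rw [hAd.sdiff_eq_left] at hGA
  have hAG : A ⊆ G := hGA ▸ sdiff_subset
  have hEA2 : E \ Ω₂ ⊆ A := hEA ▸ sdiff_subset_sdiff_right h12
  have hsub := submod ν hE hG h1
  have hi : (E ∩ G) \ Ω₁ = E \ Ω₁ := by
    rw [← hEA] at hAG
    ext x
    have h1 := @hAG x
    simp only [Set.mem_sdiff, mem_inter_iff] at h1 ⊢
    tauto
  have hu : (E ∪ G) \ Ω₁ = G \ Ω₁ := by
    rw [union_sdiff_distrib, hEA, union_eq_right]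
    rw [← hEA] at hAG ⊢
    exact fun x hx => ⟨hAG hx, hx.2⟩
  have hle := hM.2 _ (hE.inter hG) hi
  have h3 : Q ν (E ∪ G) Ω₁ ≤ Q ν G Ω₁ := by
    rw [← ENNReal.add_le_add_iff_right hM.1.ne, add_comm (Q ν G Ω₁)]
    exact (add_le_add le_rfl hle).trans hsub
  have h4 : Q ν (E ∪ G) Ω₂ ≤ Q ν G Ω₂ := by
    rw [loc ν (E := E ∪ G) h1 h12, loc ν (E := G) h1 h12, hu]
    gcongr
  have h5 : (E ∪ G) \ Ω₂ = G \ Ω₂ := diff_mono_eq h12 hu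
  refine ⟨E ∪ G, hE.union hG, h5.trans hGA, ⟨h4.trans_lt hGM.1, fun F hF hFE => ?_⟩,
    subset_union_left⟩
  exact h4.trans (hGM.2 F hF (hFE.trans h5))

lemma exists_seq (ν : Measure (X × X)) {A : Set X} {W : ℕ → Set X} (hA : MeasurableSet A)
    (hW : ∀ k, MeasurableSet (W k)) (hWm : Monotone W) (hAd : ∀ k, Disjoint A (W k))
    (hf : ∀ k, ν ((W k)ᶜ ×ˢ W k) < ⊤) :
    ∃ E : ℕ → Set X, Monotone E ∧ ∀ k, MeasurableSet (E k) ∧ E k \ W k = A ∧ Mn ν (E k) (W k) := by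
  obtain ⟨G, hG, hGA, hGM⟩ := exists_min ν hA (hW 0) (hf 0)
  rw [(hAd 0).sdiff_eq_left] at hGA
  let T : ℕ → Type _ := fun k => {F : Set X // MeasurableSet F ∧ F \ W k = A ∧ Mn ν F (W k)}
  have hs : ∀ k, ∀ F : T k, ∃ F' : T (k+1), F.1 ⊆ F'.1 := by
    rintro k ⟨F, h1, h2, h3⟩
    obtain ⟨F', a, b, c, d⟩ := step ν hA (hW k) (hW (k+1)) (hWm k.le_succ) (hAd _) (hf _) h1 h2 h3
    exact ⟨⟨F', a, b, c⟩, d⟩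
  choose g hg using hs
  let E : ∀ k, T k := fun k => Nat.rec (motive := T) ⟨G, hG, hGA, hGM⟩ g k
  refine ⟨fun k => (E k).1, monotone_nat_of_le_succ fun k => hg k (E k), fun k => (E k).2⟩

lemma aux {F U G W : Set X} (hFE : F \ W = U \ W) (hG : G ⊆ U) :
    D ((F ∩ W) ∪ (G \ W)) W ⊆ D F W ∪ W ×ˢ ((U \ G) \ W) := by
  rintro ⟨x, y⟩ h
  have hx := Set.ext_iff.1 hFE x
  have hy := Set.ext_iff.1 hFE y
  have hx' := @hG x
  clear hFE hG
  simp only [D, Set.mem_sdiff, mem_prod, mem_union, mem_inter_iff, mem_compl_iff] at h hx hy ⊢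
  grind

lemma exists_loc (ν : Measure (X × X)) {A : Set X} {W : ℕ → Set X} (hA : MeasurableSet A)
    (hW : ∀ k, MeasurableSet (W k)) (hWm : Monotone W) (hAd : ∀ k, Disjoint A (W k))
    (hf : ∀ k, ν ((W k)ᶜ ×ˢ W k) < ⊤) (hf' : ∀ k, ν (W k ×ˢ (W k)ᶜ) < ⊤) :
    ∃ E : Set X, MeasurableSet E ∧ A ⊆ E ∧ E ⊆ A ∪ ⋃ k, W k ∧ ∀ k, Mn ν E (W k) := by
  obtain ⟨E, hEm, hE⟩ := exists_seq ν hA hW hWm hAd hf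
  have hmeas : MeasurableSet (⋃ k, E k) := MeasurableSet.iUnion fun k => (hE k).1
  refine ⟨⋃ k, E k, hmeas, ?_, ?_, ?_⟩
  · refine subset_trans ?_ (subset_iUnion E 0)
    conv_lhs => rw [← (hE 0).2.1]
    exact sdiff_subset
  · refine iUnion_subset fun k x hx => ?_
    by_cases h : x ∈ W k
    · exact Or.inr (mem_iUnion.2 ⟨k, h⟩)
    · left; rw [← (hE k).2.1]; exact ⟨hx, h⟩
  · intro j
    have key : ∀ F, MeasurableSet F → F \ W j = (⋃ k, E k) \ W j →
        Q ν (⋃ k, E k) (W j) ≤ Q ν F (W j) := by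
      intro F hF hFE
      let R : ℕ → Set (X × X) := fun k => (W j) ×ˢ (((⋃ k, E k) \ E k) \ W j)
      have hR0 : Tendsto (fun k => ν (R k)) atTop (𝓝 0) := by
        have hRe : ⋂ k, R k = ∅ := by
          ext ⟨x, y⟩
          simp only [R, mem_iInter, mem_prod, Set.mem_sdiff, mem_iUnion, mem_empty_iff_false, iff_false]
          intro h
          obtain ⟨i, hi⟩ := (h 0).2.1.1
          exact (h i).2.1.2 hi
        have := tendsto_measure_iInter_atTop (μ := ν) (s := R)
          (fun k => ((hW j).prod ((hmeas.diff (hE k).1).diff (hW j))).nullMeasurableSet)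
          (fun a b hab => prod_mono le_rfl (sdiff_subset_sdiff_left (sdiff_subset_sdiff_right (hEm hab))))
          ⟨0, ((measure_mono (prod_mono le_rfl fun x hx => hx.2)).trans_lt (hf' j)).ne⟩
        rwa [hRe, measure_empty] at this
      have hlim : Tendsto (fun k => Q ν F (W j) + ν (R k)) atTop (𝓝 (Q ν F (W j))) := by
        simpa using hR0.const_add (Q ν F (W j))
      refine lsc_incr ν hEm hlim ?_
      filter_upwards [eventually_ge_atTop j] with k hk
      have hMk : Mn ν (E k) (W j) := (hE k).2.2.mono (hW j) (hWm hk)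
      let Fk : Set X := (F ∩ W j) ∪ (E k \ W j)
      have hFk : MeasurableSet Fk := (hF.inter (hW j)).union ((hE k).1.diff (hW j))
      refine (hMk.2 Fk hFk ?_).trans ?_
      · ext x
        simp only [Fk, Set.mem_sdiff, mem_union, mem_inter_iff]
        tauto
      · unfold Q
        refine (measure_mono ?_).trans (measure_union_le _ _)
        exact aux hFE (subset_iUnion E k)
    refine ⟨?_, key⟩
    exact ((key _ (hmeas.diff (hW j)) (by simp)).trans (Q_diff_le ν _ _)).trans_lt (hf j)

end SMin

namespace SMin

abbrev V (n : ℕ) := EuclideanSpace ℝ (Fin n)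

/-- The kernel. -/
noncomputable def ker (n : ℕ) (s : ℝ) (p : V n × V n) : ℝ≥0∞ :=
  ENNReal.ofReal (dist p.1 p.2 ^ (-((n : ℝ) + s)))

lemma ker_meas (n : ℕ) (s : ℝ) : Measurable (ker n s) := by
  unfold ker
  fun_prop

/-- The measure on pairs. -/
noncomputable def nu (n : ℕ) (s : ℝ) : Measure (V n × V n) :=
  (volume.prod volume).withDensity (ker n s)

lemma Ls_eq (n : ℕ) (s : ℝ) {A B : Set (V n)} (hA : MeasurableSet A) (hB : MeasurableSet B) :
    Ls n s A B = nu n s (A ×ˢ B) := by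
  rw [nu, withDensity_apply _ (hA.prod hB), ← Measure.prod_restrict,
    lintegral_prod _ (ker_meas n s).aemeasurable]
  rfl

lemma Ls_comm (n : ℕ) (s : ℝ) (A B : Set (V n)) : Ls n s A B = Ls n s B A := by
  unfold Ls
  rw [lintegral_lintegral_swap]
  · simp_rw [dist_comm]
  · exact (ker_meas n s).aemeasurable

lemma Ps_eq (n : ℕ) (s : ℝ) {E Ω : Set (V n)} (hE : MeasurableSet E) (hΩ : MeasurableSet Ω) :
    Ps n s E Ω = Q (nu n s) E Ω := by
  unfold Ps Q
  rw [Ls_eq n s (hE.inter hΩ) (hE.compl.inter hΩ), Ls_eq n s (hE.inter hΩ) (hE.compl.diff hΩ),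
    Ls_eq n s (hE.diff hΩ) (hE.compl.inter hΩ), ← measure_union _ ((hE.inter hΩ).prod
    (hE.compl.diff hΩ)), ← measure_union _ ((hE.diff hΩ).prod (hE.compl.inter hΩ))]
  · congr 1
    ext ⟨x, y⟩
    simp only [D, mem_union, mem_inter_iff, Set.mem_sdiff, mem_prod, mem_compl_iff]
    tauto
  · rw [Set.disjoint_left]
    rintro ⟨x, y⟩
    simp only [mem_union, mem_inter_iff, Set.mem_sdiff, mem_prod, mem_compl_iff]
    tauto
  · rw [Set.disjoint_left]
    rintro ⟨x, y⟩
    simp only [mem_inter_iff, Set.mem_sdiff, mem_prod, mem_compl_iff]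
    tauto

lemma Q_ae (n : ℕ) (s : ℝ) {E F Ω : Set (V n)} (h : volume (E ∆ F) = 0) :
    Q (nu n s) E Ω = Q (nu n s) F Ω := by
  have hac : nu n s ≪ volume.prod volume := withDensity_absolutelyContinuous _ _
  have h1 : (volume.prod volume : Measure (V n × V n)) ((E ∆ F) ×ˢ univ) = 0 := by
    rw [Measure.prod_prod, h, zero_mul]
  have h2 : (volume.prod volume : Measure (V n × V n)) (univ ×ˢ (E ∆ F)) = 0 := by
    rw [Measure.prod_prod, h, mul_zero]
  have h3 : nu n s ((E ∆ F) ×ˢ univ ∪ univ ×ˢ (E ∆ F)) = 0 :=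
    measure_union_null (hac h1) (hac h2)
  refine measure_congr (measure_symmDiff_eq_zero_iff.1 (measure_mono_null ?_ h3))
  rintro ⟨x, y⟩ hh
  simp only [D, mem_symmDiff, mem_union, Set.mem_sdiff, mem_prod, mem_compl_iff, mem_univ,
    and_true, true_and] at hh ⊢
  tauto

lemma SMinimal_of (n : ℕ) (s : ℝ) {E Ω : Set (V n)} (hE : MeasurableSet E) (hΩ : MeasurableSet Ω)
    (h : Mn (nu n s) E Ω) : SMinimal n s E Ω := by
  unfold SMinimal
  rw [Ps_eq n s hE hΩ]
  refine ⟨h.1, fun F hF hFE => ?_⟩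
  rw [Ps_eq n s hF hΩ]
  have hG : MeasurableSet ((F ∩ Ω) ∪ (E \ Ω)) := (hF.inter hΩ).union (hE.diff hΩ)
  refine (h.2 _ hG ?_).trans_eq (Q_ae n s (measure_mono_null ?_ hFE))
  · ext x
    simp only [Set.mem_sdiff, mem_union, mem_inter_iff]
    tauto
  · intro x hx
    simp only [mem_symmDiff, Set.mem_sdiff, mem_union, mem_inter_iff] at hx ⊢
    tauto

lemma radial (n : ℕ) (hn : 1 ≤ n) (s : ℝ) (hs : s ∈ Set.Ioo (0 : ℝ) 1) :
    ∫⁻ h : V n, ENNReal.ofReal (‖h‖ ^ (-((n : ℝ) + s)) * min 1 ‖h‖) < ⊤ := by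
  haveI : Nonempty (Fin n) := ⟨⟨0, hn⟩⟩
  have hint : Integrable (fun h : V n => ‖h‖ ^ (-((n : ℝ) + s)) * min 1 ‖h‖) volume := by
    have := (integrable_fun_norm_addHaar (volume : Measure (V n))
      (f := fun t : ℝ => t ^ (-((n : ℝ) + s)) * min 1 t))
    refine this.2 ?_
    rw [finrank_euclideanSpace_fin]
    have hc : ∀ t : ℝ, 0 < t → t ^ (n - 1) • (t ^ (-((n : ℝ) + s)) * min 1 t)
        = t ^ (-1 - s) * min 1 t := by
      intro t ht
      rw [smul_eq_mul, ← mul_assoc, ← Real.rpow_natCast, ← Real.rpow_add ht]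
      congr 2
      push_cast [Nat.cast_sub hn]
      ring
    rw [← Ioc_union_Ioi_eq_Ioi (zero_le_one (α := ℝ))]
    refine IntegrableOn.union ?_ ?_
    · have h1 : IntegrableOn (fun t : ℝ => t ^ (-s)) (Ioc 0 1) := by
        rw [← intervalIntegrable_iff_integrableOn_Ioc_of_le zero_le_one]
        exact intervalIntegral.intervalIntegrable_rpow' (by linarith [hs.2])
      refine h1.congr_fun (fun t ht => ?_) measurableSet_Ioc
      simp only []
      rw [hc t ht.1, min_eq_right ht.2]
      nth_rw 3 [← Real.rpow_one t]
      rw [← Real.rpow_add ht.1]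
      congr 1
      ring
    · have h1 : IntegrableOn (fun t : ℝ => t ^ (-1 - s)) (Ioi 1) :=
        integrableOn_Ioi_rpow_of_lt (by linarith [hs.1]) one_pos
      refine h1.congr_fun (fun t ht => ?_) measurableSet_Ioi
      have ht' : (1 : ℝ) < t := ht
      simp only []
      rw [hc t (by linarith), min_eq_left ht'.le, mul_one]
  exact hint.lintegral_lt_top

lemma shell (n : ℕ) (hn : 1 ≤ n) (c : V n) {r : ℝ} (hr : 0 < r) :
    ∃ C : ℝ≥0∞, C < ⊤ ∧ ∀ h : V n, volume (ball c r ∩ {x | x + h ∉ ball c r}) ≤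
      C * ENNReal.ofReal (min 1 ‖h‖) := by
  haveI : Nonempty (Fin n) := ⟨⟨0, hn⟩⟩
  set ω := volume (ball (0 : V n) 1) with hω
  have hωf : ω < ⊤ := measure_ball_lt_top
  have hvol : ∀ t : ℝ, 0 ≤ t → volume (ball c t) = ENNReal.ofReal (t ^ n) * ω := by
    intro t ht
    rw [Measure.addHaar_ball _ _ ht, finrank_euclideanSpace_fin]
  set K : ℝ := r ^ n * (1 + n / r + 1 / r) with hK
  refine ⟨ENNReal.ofReal K * ω, ENNReal.mul_lt_top ENNReal.ofReal_lt_top hωf, fun h => ?_⟩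
  have hrn : 0 < r ^ n := by positivity
  have hK0 : 0 ≤ K := by positivity
  have hbase : volume (ball c r ∩ {x | x + h ∉ ball c r}) ≤ ENNReal.ofReal (r ^ n) * ω := by
    rw [← hvol r hr.le]
    exact measure_mono inter_subset_left
  have hgoal : ∀ a : ℝ, a ≤ K * min 1 ‖h‖ →
      volume (ball c r ∩ {x | x + h ∉ ball c r}) ≤ ENNReal.ofReal a * ω →
      volume (ball c r ∩ {x | x + h ∉ ball c r}) ≤
        ENNReal.ofReal K * ω * ENNReal.ofReal (min 1 ‖h‖) := by
    intro a ha hv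
    refine hv.trans ?_
    rw [mul_right_comm, ← ENNReal.ofReal_mul hK0]
    gcongr
  rcases le_or_gt 1 ‖h‖ with h1 | h1
  · refine hgoal (r ^ n) ?_ hbase
    rw [min_eq_left h1, mul_one, hK]
    have : 0 ≤ n / r + 1 / r := by positivity
    nlinarith
  rcases le_or_gt r ‖h‖ with h2 | h2
  · refine hgoal (r ^ n) ?_ hbase
    rw [min_eq_right h1.le, hK, mul_assoc]
    have h3 : 1 ≤ 1 / r * ‖h‖ := by
      rw [one_div, ← div_eq_inv_mul, le_div_iff₀ hr]; linarith
    have h4 : 0 ≤ (1 + n / r) * ‖h‖ := by positivity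
    have h5 : 1 ≤ (1 + n / r + 1 / r) * ‖h‖ := by linarith
    nlinarith
  · refine hgoal (r ^ n - (r - ‖h‖) ^ n) ?_ ?_
    · rw [min_eq_right h1.le, hK]
      have hb := one_add_mul_le_pow (a := -(‖h‖ / r)) (by
        have : ‖h‖ / r < 1 := by rw [div_lt_one hr]; exact h2
        linarith) n
      have e : (r - ‖h‖) ^ n = r ^ n * (1 + -(‖h‖ / r)) ^ n := by
        rw [← mul_pow]; congr 1; field_simp; ring
      rw [e]
      have h6 : r ^ n * (1 + n * -(‖h‖ / r)) ≤ r ^ n * (1 + -(‖h‖ / r)) ^ n := by gcongr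
      have h7 : 0 ≤ r ^ n * ((1 + 1 / r) * ‖h‖) := by positivity
      have e2 : r ^ n * (1 + n / r + 1 / r) * ‖h‖ =
        r ^ n * ((1 + 1 / r) * ‖h‖) + (r ^ n - r ^ n * (1 + n * -(‖h‖ / r))) := by
        field_simp; ring
      linarith
    · have hsub : ball c r ∩ {x | x + h ∉ ball c r} ⊆ ball c r \ ball c (r - ‖h‖) := by
        rintro x ⟨hx, hx'⟩
        refine ⟨hx, fun hx2 => hx' ?_⟩
        rw [mem_ball, dist_eq_norm] at hx2 ⊢
        calc ‖x + h - c‖ = ‖(x - c) + h‖ := by congr 1; abel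
          _ ≤ ‖x - c‖ + ‖h‖ := norm_add_le _ _
          _ < r := by linarith
      refine (measure_mono hsub).trans ?_
      rw [measure_sdiff (ball_subset_ball (by linarith [norm_nonneg h]))
        measurableSet_ball.nullMeasurableSet measure_ball_lt_top.ne, hvol r hr.le,
        hvol _ (by linarith), ENNReal.ofReal_sub _ (by
          have : 0 ≤ r - ‖h‖ := by linarith
          positivity), ENNReal.sub_mul (fun _ _ => hωf.ne)]

lemma ball_per (n : ℕ) (hn : 1 ≤ n) (s : ℝ) (hs : s ∈ Set.Ioo (0 : ℝ) 1) (c : V n) {r : ℝ}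
    (hr : 0 < r) : Ls n s (ball c r) (ball c r)ᶜ < ⊤ := by
  obtain ⟨C, hC, hCh⟩ := shell n hn c hr
  let k : V n → ℝ≥0∞ := fun h => ENNReal.ofReal (‖h‖ ^ (-((n : ℝ) + s)))
  have hk : Measurable k := by fun_prop
  let S : Set (V n × V n) := {p | p.1 ∈ ball c r ∧ p.1 + p.2 ∉ ball c r}
  have hS : MeasurableSet S :=
    (measurable_fst measurableSet_ball).inter
      ((measurable_fst.add measurable_snd) measurableSet_ball.compl)
  have e1 : Ls n s (ball c r) (ball c r)ᶜ =
      ∫⁻ x, ∫⁻ h, S.indicator (fun p => k p.2) (x, h) := by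
    unfold Ls
    rw [← lintegral_indicator measurableSet_ball]
    refine lintegral_congr fun x => ?_
    by_cases hx : x ∈ ball c r
    · rw [indicator_of_mem hx, ← lintegral_indicator measurableSet_ball.compl,
        ← lintegral_add_left_eq_self _ x]
      refine lintegral_congr fun h => ?_
      by_cases hh : x + h ∈ ball c r
      · rw [indicator_of_notMem (by simpa using hh), indicator_of_notMem]
        exact fun h' => h'.2 hh
      · rw [indicator_of_mem (by simpa using hh), indicator_of_mem (show (x, h) ∈ S from ⟨hx, hh⟩)]
        simp [k]
    · rw [indicator_of_notMem hx]
      symm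
      rw [lintegral_eq_zero_iff' (by fun_prop (disch := assumption))]
      · refine Eventually.of_forall fun h => ?_
        exact indicator_of_notMem (fun h' => hx h'.1) _
  rw [e1, lintegral_lintegral_swap (by
    exact ((hk.comp measurable_snd).indicator hS).aemeasurable)]
  have e2 : ∀ h : V n, ∫⁻ x, S.indicator (fun p => k p.2) (x, h) ≤
      C * ENNReal.ofReal (‖h‖ ^ (-((n : ℝ) + s)) * min 1 ‖h‖) := by
    intro h
    have hT : MeasurableSet (ball c r ∩ {x | x + h ∉ ball c r}) :=
      measurableSet_ball.inter ((measurable_id.add_const h) measurableSet_ball.compl)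
    have : ∀ x, S.indicator (fun p => k p.2) (x, h) =
        (ball c r ∩ {x | x + h ∉ ball c r}).indicator (fun _ => k h) x := fun x => rfl
    simp_rw [this]
    rw [lintegral_indicator_const hT, ENNReal.ofReal_mul (by positivity), mul_left_comm]
    exact mul_le_mul_right (hCh h) _
  refine (lintegral_mono e2).trans_lt ?_
  rw [lintegral_const_mul' _ _ hC.ne]
  exact ENNReal.mul_lt_top hC (radial n hn s hs)

/-- Finite perimeter in both orders. -/
def FP (n : ℕ) (s : ℝ) (W : Set (V n)) : Prop :=
  IsOpen W ∧ nu n s (W ×ˢ Wᶜ) < ⊤ ∧ nu n s (Wᶜ ×ˢ W) < ⊤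

lemma FP_ball (n : ℕ) (hn : 1 ≤ n) (s : ℝ) (hs : s ∈ Set.Ioo (0 : ℝ) 1) (c : V n) {r : ℝ}
    (hr : 0 < r) : FP n s (ball c r) := by
  have h := ball_per n hn s hs c hr
  refine ⟨isOpen_ball, ?_, ?_⟩
  · rwa [← Ls_eq n s measurableSet_ball measurableSet_ball.compl]
  · rwa [← Ls_eq n s measurableSet_ball.compl measurableSet_ball, Ls_comm]

lemma FP_empty (n : ℕ) (s : ℝ) : FP n s ∅ := by
  refine ⟨isOpen_empty, ?_, ?_⟩ <;> simp

lemma FP_union (n : ℕ) (s : ℝ) {A B : Set (V n)} (hA : FP n s A) (hB : FP n s B) :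
    FP n s (A ∪ B) := by
  refine ⟨hA.1.union hB.1, ?_, ?_⟩
  · refine (measure_mono ?_).trans_lt ((measure_union_le _ _).trans_lt
      (ENNReal.add_lt_top.2 ⟨hA.2.1, hB.2.1⟩))
    rintro ⟨x, y⟩ h
    simp only [mem_union, mem_prod, mem_compl_iff] at h ⊢
    tauto
  · refine (measure_mono ?_).trans_lt ((measure_union_le _ _).trans_lt
      (ENNReal.add_lt_top.2 ⟨hA.2.2, hB.2.2⟩))
    rintro ⟨x, y⟩ h
    simp only [mem_union, mem_prod, mem_compl_iff] at h ⊢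
    tauto

lemma exhaust (n : ℕ) (hn : 1 ≤ n) (s : ℝ) (hs : s ∈ Set.Ioo (0 : ℝ) 1) {Ω : Set (V n)}
    (hΩ : IsOpen Ω) : ∃ W : ℕ → Set (V n), Monotone W ∧ (∀ k, FP n s (W k)) ∧ ⋃ k, W k = Ω := by
  classical
  let B : ℕ → Set (V n) := fun m =>
    if ball (TopologicalSpace.denseSeq (V n) m.unpair.1) (1 / ((m.unpair.2 : ℝ) + 1)) ⊆ Ω then
      ball (TopologicalSpace.denseSeq (V n) m.unpair.1) (1 / ((m.unpair.2 : ℝ) + 1)) else ∅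
  have hB : ∀ m, FP n s (B m) := by
    intro m
    simp only [B]
    split_ifs
    · exact FP_ball n hn s hs _ (by positivity)
    · exact FP_empty n s
  have hBΩ : ∀ m, B m ⊆ Ω := by
    intro m
    simp only [B]
    split_ifs with h
    · exact h
    · exact empty_subset _
  have hcov : Ω ⊆ ⋃ m, B m := by
    intro x hx
    obtain ⟨ε, hε, hεΩ⟩ := Metric.isOpen_iff.1 hΩ x hx
    obtain ⟨j, hj⟩ := exists_nat_one_div_lt (half_pos hε)
    have hj0 : (0 : ℝ) < 1 / ((j : ℝ) + 1) := by positivity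
    obtain ⟨i, hi⟩ := (TopologicalSpace.denseRange_denseSeq (V n)).exists_dist_lt x hj0
    refine mem_iUnion.2 ⟨Nat.pair i j, ?_⟩
    simp only [B, Nat.unpair_pair]
    rw [if_pos]
    · exact hi
    · intro y hy
      apply hεΩ
      rw [mem_ball] at hy ⊢
      calc dist y x ≤ dist y (TopologicalSpace.denseSeq (V n) i) +
            dist (TopologicalSpace.denseSeq (V n) i) x := dist_triangle _ _ _
        _ < ε := by rw [dist_comm _ x]; linarith
  let W : ℕ → Set (V n) := fun k => Nat.rec (B 0) (fun i S => S ∪ B (i + 1)) k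
  have hWs : ∀ k, W (k + 1) = W k ∪ B (k + 1) := fun k => rfl
  refine ⟨W, monotone_nat_of_le_succ fun k => by rw [hWs]; exact subset_union_left, ?_, ?_⟩
  · intro k
    induction k with
    | zero => exact hB 0
    | succ k ih => rw [hWs]; exact FP_union n s ih (hB _)
  · apply subset_antisymm
    · refine iUnion_subset fun k => ?_
      induction k with
      | zero => exact hBΩ 0
      | succ k ih => rw [hWs]; exact union_subset ih (hBΩ _)
    · refine hcov.trans (iUnion_mono fun k => ?_)
      cases k with
      | zero => exact le_rfl
      | succ k => rw [hWs]; exact subset_union_right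

end SMin

/-- Corollary 1.10: in any open set `Ω` and for any exterior data `E₀ ∖ Ω`,
there exists a locally `s`-minimal set. -/
theorem exists_locSMinimal
    (n : ℕ) (hn : 1 ≤ n) (s : ℝ) (hs : s ∈ Set.Ioo (0 : ℝ) 1)
    (Ω : Set (EuclideanSpace ℝ (Fin n))) (hΩ : IsOpen Ω)
    (E₀ : Set (EuclideanSpace ℝ (Fin n))) (hE₀ : MeasurableSet E₀) :
    ∃ E : Set (EuclideanSpace ℝ (Fin n)), MeasurableSet E ∧
      LocSMinimal n s E Ω ∧ volume ((E \ Ω) ∆ (E₀ \ Ω)) = 0 := by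
  obtain ⟨W, hWm, hW, hWΩ⟩ := SMin.exhaust n hn s hs hΩ
  have hsub : ∀ k, W k ⊆ Ω := fun k => hWΩ ▸ subset_iUnion W k
  have hA : MeasurableSet (E₀ \ Ω) := hE₀.diff hΩ.measurableSet
  obtain ⟨E, hE, hAE, hEA, hM⟩ := SMin.exists_loc (SMin.nu n s) hA
    (fun k => (hW k).1.measurableSet) hWm
    (fun k => (show Disjoint (E₀ \ Ω) Ω from Set.disjoint_sdiff_left).mono_right (hsub k))
    (fun k => (hW k).2.2) (fun k => (hW k).2.1)
  rw [hWΩ] at hEA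
  refine ⟨E, hE, ?_, ?_⟩
  · intro Ω' ho hc hcl
    obtain ⟨k, hk⟩ := hc.elim_directed_cover W (fun k => (hW k).1) (hWΩ ▸ hcl)
      hWm.directed_le
    exact SMin.SMinimal_of n s hE ho.measurableSet
      ((hM k).mono ho.measurableSet (subset_closure.trans hk))
  · have : E \ Ω = E₀ \ Ω := by
      ext x
      have h1 := @hAE x
      have h2 := @hEA x
      simp only [Set.mem_sdiff, mem_union] at h1 h2 ⊢
      tauto
    rw [this, symmDiff_self]
    simp
end
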